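/- arXiv:math/0602211 — 4 statements merged into one kernel-verified Lean document; each statement's English description precedes it below -/
import Mathlib

section
/- (Lemma 11) Let a be a transition density on a compact state space satisfying condition (19) and the uniform continuity condition (24): Δ(x', x) := sup_{x''} |a(x, x'') − a(x', x'')| / h(x'') → 0 as d(x, x') → 0, with the same density h as in (19). Then under i.i.d. sampling of size N from g, for every ε > 0, P[‖B(A* E_N(g), b) − B(A* g, b)‖₁ > ε] → 0 exponentially fast in N, uniformly over all probability densities g and all likelihoods b with 0 < ∫ h(x') b(x') dμ(x') < ∞. -/
open MeasureTheory

/-- The Bayes operator `B(f, b)(x) = f(x) b(x) / ∫ f b dμ`. -/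
noncomputable def bayesOp {α : Type*} [MeasurableSpace α] (μ : Measure α)
    (f b : α → ℝ) : α → ℝ :=
  fun x => f x * b x / ∫ x', f x' * b x' ∂μ

/-- Two-sided Hoeffding inequality for i.i.d. samples of a `[0,1]`-valued function. -/
lemma aux_hoeffding {α : Type*} [MeasurableSpace α] (ν : Measure α) [IsProbabilityMeasure ν]
    (f : α → ℝ) (hf : Measurable f) (h01 : ∀ x, f x ∈ Set.Icc (0:ℝ) 1) (t : ℝ) (ht : 0 < t)
    (N : ℕ) :
    (Measure.pi fun _ : Fin N => ν) {xs | t < |(N:ℝ)⁻¹ * ∑ i, f (xs i) - ∫ x, f x ∂ν|}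
      ≤ ENNReal.ofReal (2 * Real.exp (-(2 * t ^ 2) * N)) := by
  rcases Nat.eq_zero_or_pos N with rfl | hN
  · refine prob_le_one.trans ?_
    simp
  have hNr : (0:ℝ) < N := by exact_mod_cast hN
  set P := Measure.pi fun _ : Fin N => ν with hP
  set m := ∫ x, f x ∂ν with hm
  have key : ∀ F : α → ℝ, Measurable F → ProbabilityTheory.HasSubgaussianMGF F (1/4) ν →
      P.real {xs | t * N ≤ ∑ i, F (xs i)} ≤ Real.exp (-(2 * t ^ 2) * N) := by
    intro F hF hsub
    have hind : ProbabilityTheory.iIndepFun (fun (i : Fin N) (xs : Fin N → α) => F (xs i)) P :=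
      ProbabilityTheory.iIndepFun_pi (X := fun _ => F) (fun _ => hF.aemeasurable)
    have h1 : ∀ i ∈ (Finset.univ : Finset (Fin N)),
        ProbabilityTheory.HasSubgaussianMGF (fun xs : Fin N → α => F (xs i)) (1/4) P := by
      intro i _
      refine ProbabilityTheory.HasSubgaussianMGF.of_map (Y := fun xs : Fin N → α => xs i)
        (measurable_pi_apply i).aemeasurable ?_
      rwa [(measurePreserving_eval (fun _ : Fin N => ν) i).map_eq]
    have h2 := ProbabilityTheory.HasSubgaussianMGF.measure_sum_ge_le_of_iIndepFun hind h1
      (ε := t * N) (by positivity)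
    refine h2.trans (le_of_eq ?_)
    congr 1
    simp
    field_simp
    ring
  have hs := ProbabilityTheory.hasSubgaussianMGF_of_mem_Icc (μ := ν) (X := f) hf.aemeasurable
    (Filter.Eventually.of_forall h01)
  have hc : ((‖(1:ℝ) - 0‖₊ / 2) ^ 2 : NNReal) = 1/4 := by
    rw [sub_zero, nnnorm_one, div_pow]; norm_num
  rw [hc] at hs
  have k1 := key (fun x => f x - m) (hf.sub_const _) hs
  have k2 := key (-fun x => f x - m) (hf.sub_const _).neg hs.neg
  have hsub : {xs : Fin N → α | t < |(N:ℝ)⁻¹ * ∑ i, f (xs i) - m|} ⊆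
      {xs | t * N ≤ ∑ i, (f (xs i) - m)} ∪
      {xs | t * N ≤ ∑ i, (-fun x => f x - m) (xs i)} := by
    intro xs hxs
    simp only [Set.mem_ofPred_eq] at hxs
    simp only [Set.mem_union, Set.mem_ofPred_eq, Pi.neg_apply, Finset.sum_neg_distrib,
      Finset.sum_sub_distrib, Finset.sum_const, Finset.card_univ, Fintype.card_fin, nsmul_eq_mul]
    have e : ∑ i, f (xs i) - N * m = N * ((N:ℝ)⁻¹ * ∑ i, f (xs i) - m) := by
      field_simp
    rw [e]
    rcases lt_abs.1 hxs with h | h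
    · left; nlinarith
    · right; nlinarith
  have e2 : ∀ s : Set (Fin N → α), P s = ENNReal.ofReal (P.real s) := fun s => by
    simp [Measure.real]
  calc P _ ≤ _ := measure_mono hsub
    _ ≤ _ := measure_union_le _ _
    _ ≤ ENNReal.ofReal (Real.exp (-(2 * t ^ 2) * N)) + ENNReal.ofReal (Real.exp (-(2 * t ^ 2) * N)) := by
        rw [e2, e2]
        exact add_le_add (ENNReal.ofReal_le_ofReal k1) (ENNReal.ofReal_le_ofReal k2)
    _ = _ := by
        rw [← ENNReal.ofReal_add (by positivity) (by positivity)]; congr 1; ring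

/-- Stability of the Bayes operator. -/
lemma aux_bayes {α : Type*} [MeasurableSpace α] (μ : Measure α) (h b ψ φ : α → ℝ)
    (ca Ca κ : ℝ) (hca : 0 < ca)
    (hb : Measurable b) (hb0 : ∀ x, 0 ≤ b x) (hh0 : ∀ x, 0 ≤ h x)
    (hhb : Integrable (fun x => h x * b x) μ) (hpos : 0 < ∫ x, h x * b x ∂μ)
    (hψ : Measurable ψ) (hφ : Measurable φ)
    (hψb : ∀ x, ca * h x ≤ ψ x ∧ ψ x ≤ Ca * h x)
    (hφb : ∀ x, ca * h x ≤ φ x ∧ φ x ≤ Ca * h x)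
    (hκ : ∀ x, |ψ x - φ x| ≤ κ * h x) :
    ∫ x, |bayesOp μ ψ b x - bayesOp μ φ b x| ∂μ ≤ 2 * κ / ca := by
  have int : ∀ f : α → ℝ, Measurable f → (∀ x, ca * h x ≤ f x ∧ f x ≤ Ca * h x) →
      Integrable (fun x => f x * b x) μ ∧ ca * ∫ x, h x * b x ∂μ ≤ ∫ x, f x * b x ∂μ := by
    intro f hf hfb
    have hi : Integrable (fun x => f x * b x) μ := by
      refine (hhb.const_mul Ca).mono' (hf.mul hb).aestronglyMeasurable
        (Filter.Eventually.of_forall fun x => ?_)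
      have h0 : 0 ≤ f x := (mul_nonneg hca.le (hh0 x)).trans (hfb x).1
      rw [Real.norm_of_nonneg (mul_nonneg h0 (hb0 x)), ← mul_assoc]
      exact mul_le_mul_of_nonneg_right (hfb x).2 (hb0 x)
    refine ⟨hi, ?_⟩
    rw [← integral_const_mul]
    refine integral_mono (hhb.const_mul ca) hi fun x => ?_
    simp only [← mul_assoc]
    exact mul_le_mul_of_nonneg_right (hfb x).1 (hb0 x)
  obtain ⟨iψ, lψ⟩ := int ψ hψ hψb
  obtain ⟨iφ, lφ⟩ := int φ hφ hφb
  set H := ∫ x, h x * b x ∂μ with hH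
  set S := ∫ x, ψ x * b x ∂μ with hS
  set T := ∫ x, φ x * b x ∂μ with hT
  have hcH : 0 < ca * H := mul_pos hca hpos
  have hS0 : 0 < S := hcH.trans_le lψ
  have hT0 : 0 < T := hcH.trans_le lφ
  have hST : |S - T| ≤ κ * H := by
    rw [hS, hT, ← integral_sub iψ iφ, hH, ← integral_const_mul]
    refine (abs_integral_le_integral_abs).trans
      (integral_mono (iψ.sub iφ).abs (hhb.const_mul κ) fun x => ?_)
    simp only [← sub_mul, abs_mul, abs_of_nonneg (hb0 x), ← mul_assoc]
    exact mul_le_mul_of_nonneg_right (hκ x) (hb0 x)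
  have hpt : ∀ x, |bayesOp μ ψ b x - bayesOp μ φ b x| ≤
      κ / S * (h x * b x) + (|S - T| / (S * T)) * (φ x * b x) := by
    intro x
    have h0 : 0 ≤ φ x := (mul_nonneg hca.le (hh0 x)).trans (hφb x).1
    have e : bayesOp μ ψ b x - bayesOp μ φ b x
        = (ψ x - φ x) * b x / S + (T - S) / (S * T) * (φ x * b x) := by
      simp only [bayesOp, ← hS, ← hT]
      field_simp
      ring
    rw [e]
    refine (abs_add_le _ _).trans (add_le_add ?_ ?_)
    · rw [abs_div, abs_mul, abs_of_nonneg (hb0 x), abs_of_pos hS0, div_mul_eq_mul_div, ← mul_assoc]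
      exact div_le_div_of_nonneg_right (mul_le_mul_of_nonneg_right (hκ x) (hb0 x)) hS0.le
    · rw [abs_mul, abs_div, abs_of_nonneg (mul_nonneg h0 (hb0 x)), abs_of_pos (mul_pos hS0 hT0),
        abs_sub_comm]
  have iR : Integrable (fun x => κ / S * (h x * b x) + (|S - T| / (S * T)) * (φ x * b x)) μ :=
    (hhb.const_mul _).add (iφ.const_mul _)
  have hκ0 : 0 ≤ κ := by
    by_contra hc
    have := (abs_nonneg _).trans hST
    nlinarith
  calc _ ≤ ∫ x, (κ / S * (h x * b x) + (|S - T| / (S * T)) * (φ x * b x)) ∂μ :=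
        integral_mono_of_nonneg (Filter.Eventually.of_forall fun x => abs_nonneg _) iR
          (Filter.Eventually.of_forall hpt)
    _ = κ / S * H + (|S - T| / (S * T)) * T := by
        rw [integral_add (hhb.const_mul _) (iφ.const_mul _), integral_const_mul, integral_const_mul]
    _ = (κ * H + |S - T|) / S := by field_simp
    _ ≤ (2 * (κ * H)) / (ca * H) := by
        apply div_le_div₀ (by positivity) (by linarith) hcH lψ
    _ = 2 * κ / ca := by field_simp

/-- Finite measurable nets. -/
lemma aux_net {α : Type*} [MeasurableSpace α] [MetricSpace α] [CompactSpace α] [BorelSpace α]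
    [Nonempty α] (η : ℝ) (hη : 0 < η) : ∃ p : SimpleFunc α α, ∀ x, dist x (p x) < η := by
  let e := TopologicalSpace.denseSeq α
  have hd := TopologicalSpace.denseRange_denseSeq α
  obtain ⟨t, ht⟩ := isCompact_univ.elim_finite_subcover (fun k => Metric.ball (e k) η)
    (fun k => Metric.isOpen_ball) (by
      intro x _
      obtain ⟨k, hk⟩ := hd.exists_dist_lt x hη
      exact Set.mem_iUnion.2 ⟨k, hk⟩)
  refine ⟨SimpleFunc.nearestPt e (t.sup id), fun x => ?_⟩
  have hx := ht (Set.mem_univ x)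
  simp only [Set.mem_iUnion, Metric.mem_ball, exists_prop] at hx
  obtain ⟨k, hkt, hk⟩ := hx
  have h1 := SimpleFunc.edist_nearestPt_le e x (Finset.le_sup (f := id) hkt)
  rw [edist_dist, edist_dist, ENNReal.ofReal_le_ofReal_iff dist_nonneg] at h1
  rw [dist_comm] at hk ⊢
  exact h1.trans_lt hk

lemma aux_simple {α : Type*} [MeasurableSpace α] (p : SimpleFunc α α) (u : α → ℝ) (x : α) :
    u (p x) = ∑ z ∈ p.range, (p ⁻¹' {z}).indicator (fun _ => (1:ℝ)) x * u z := by
  classical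
  rw [Finset.sum_eq_single (p x)]
  · simp
  · intro z _ hz
    simp [Set.indicator, hz.symm]
  · intro hx
    exact absurd (p.mem_range_self x) hx

/-- Deviation of averages controlled by the deviations of cell frequencies. -/
lemma aux_dev {α : Type*} [MeasurableSpace α] (ν : Measure α) [IsProbabilityMeasure ν]
    (p : SimpleFunc α α) (u : α → ℝ) (hu : Measurable u) (C d t : ℝ) (ht : 0 ≤ t)
    (hC : ∀ x, |u x| ≤ C) (hd : ∀ x, |u x - u (p x)| ≤ d) (N : ℕ) (hN : 0 < N) (xs : Fin N → α)
    (hxs : ∀ z ∈ p.range, |(N:ℝ)⁻¹ * ∑ i, (p ⁻¹' {z}).indicator (fun _ => (1:ℝ)) (xs i)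
      - ∫ x, (p ⁻¹' {z}).indicator (fun _ => (1:ℝ)) x ∂ν| ≤ t) :
    |(N:ℝ)⁻¹ * ∑ i, u (xs i) - ∫ x, u x ∂ν| ≤ 2 * d + p.range.card * (t * C) := by
  have hNr : (0:ℝ) < N := by exact_mod_cast hN
  have iu : Integrable u ν := Integrable.of_bound hu.aestronglyMeasurable C
    (Filter.Eventually.of_forall hC)
  have iup : Integrable (fun x => u (p x)) ν :=
    Integrable.of_bound (hu.comp p.measurable).aestronglyMeasurable C
    (Filter.Eventually.of_forall fun x => hC (p x))
  have hind : ∀ z, Integrable ((p ⁻¹' {z}).indicator (fun _ => (1:ℝ))) ν := fun z =>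
    (integrable_const 1).indicator (p.measurableSet_fiber z)
  have h1 : |(N:ℝ)⁻¹ * ∑ i, u (xs i) - (N:ℝ)⁻¹ * ∑ i, u (p (xs i))| ≤ d := by
    rw [← mul_sub, ← Finset.sum_sub_distrib, abs_mul, abs_of_pos (inv_pos.2 hNr)]
    have : |∑ i, (u (xs i) - u (p (xs i)))| ≤ N * d := by
      refine (Finset.abs_sum_le_sum_abs _ _).trans ?_
      refine (Finset.sum_le_sum fun i _ => hd (xs i)).trans ?_
      simp
    rw [inv_mul_le_iff₀ hNr]
    exact this
  have h2 : |∫ x, u x ∂ν - ∫ x, u (p x) ∂ν| ≤ d := by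
    rw [← integral_sub iu iup]
    have := norm_integral_le_of_norm_le_const (μ := ν) (C := d) (f := fun x => u x - u (p x))
      (Filter.Eventually.of_forall fun x => hd x)
    simpa using this
  have h3 : |(N:ℝ)⁻¹ * ∑ i, u (p (xs i)) - ∫ x, u (p x) ∂ν| ≤ p.range.card * (t * C) := by
    have e1 : ∫ x, u (p x) ∂ν =
        ∑ z ∈ p.range, (∫ x, (p ⁻¹' {z}).indicator (fun _ => (1:ℝ)) x ∂ν) * u z := by
      simp_rw [aux_simple p u]
      rw [integral_finsetSum _ fun z _ => (hind z).mul_const _]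
      simp_rw [integral_mul_const]
    have e2 : (N:ℝ)⁻¹ * ∑ i, u (p (xs i)) = ∑ z ∈ p.range,
        ((N:ℝ)⁻¹ * ∑ i, (p ⁻¹' {z}).indicator (fun _ => (1:ℝ)) (xs i)) * u z := by
      simp_rw [aux_simple p u]
      rw [Finset.sum_comm, Finset.mul_sum]
      refine Finset.sum_congr rfl fun z _ => ?_
      rw [← Finset.sum_mul, mul_assoc]
    rw [e1, e2, ← Finset.sum_sub_distrib]
    refine (Finset.abs_sum_le_sum_abs _ _).trans ?_
    rw [← nsmul_eq_mul]
    refine Finset.sum_le_card_nsmul _ _ _ fun z hz => ?_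
    rw [← sub_mul, abs_mul]
    exact mul_le_mul (hxs z hz) (hC z) (abs_nonneg _) ht
  rw [abs_le] at *
  constructor <;> linarith [h1.1, h1.2, h2.1, h2.2, h3.1, h3.2]

/-- Lemma 11: on a compact state space, if the transition density `a` satisfies
condition (19) (`c_a h ≤ a(x',·) ≤ C_a h`) and the uniform continuity condition (24)
(`Δ(x',x) = sup_{x''} |a(x,x'') − a(x',x'')|/h(x'') → 0` as `d(x,x') → 0`), then under
i.i.d. sampling of size `N` from `g`,
`P[‖B(A* E_N(g), b) − B(A* g, b)‖₁ > ε] → 0` exponentially fast in `N`, uniformly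
over all densities `g` and all likelihoods `b` with `0 < ∫ h b dμ < ∞`. -/
theorem bayes_markov_empirical_L1_exponential_bound_compact
    {α : Type*} [MeasurableSpace α] [MetricSpace α] [CompactSpace α] [BorelSpace α]
    (μ : Measure α) [SigmaFinite μ]
    (a : α → α → ℝ)
    (ha_meas : Measurable (Function.uncurry a))
    (ha_nonneg : ∀ x' x, 0 ≤ a x' x)
    (ha_kernel : ∀ x', ∫ x, a x' x ∂μ = 1)
    (h : α → ℝ) (ca Ca : ℝ) (hca : 0 < ca) (hcaCa : ca < Ca)
    (hh_meas : Measurable h) (hh_nonneg : ∀ x, 0 ≤ h x)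
    (hh_int : Integrable h μ) (hh_one : (∫ x, h x ∂μ) = 1)
    -- condition (19)
    (h19 : ∀ x' x, ca * h x ≤ a x' x ∧ a x' x ≤ Ca * h x)
    -- condition (24)
    (h24 : ∀ δ > (0:ℝ), ∃ η > (0:ℝ), ∀ x x', dist x x' < η →
      ∀ x'', |a x x'' - a x' x''| ≤ δ * h x'') :
    ∀ ε : ℝ, 0 < ε → ∃ c₁ c₂ : ℝ, 0 < c₂ ∧
      ∀ g : α → ℝ, Measurable g → (∀ x, 0 ≤ g x) → Integrable g μ →
        (∫ x, g x ∂μ) = 1 →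
      ∀ b : α → ℝ, Measurable b → (∀ x, 0 ≤ b x) →
        Integrable (fun x => h x * b x) μ → (0 < ∫ x, h x * b x ∂μ) →
      ∀ N : ℕ,
        (Measure.pi fun _ : Fin N => μ.withDensity fun x => ENNReal.ofReal (g x))
            {xs | ε < ∫ x, |bayesOp μ (fun y => (N : ℝ)⁻¹ * ∑ i, a (xs i) y) b x
                - bayesOp μ (fun y => ∫ x', g x' * a x' y ∂μ) b x| ∂μ}
          ≤ ENNReal.ofReal (c₁ * Real.exp (-c₂ * N)) := by
  intro ε hε
  have hne : Nonempty α := by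
    by_contra hc
    rw [not_nonempty_iff] at hc
    simp [integral_of_isEmpty] at hh_one
  have hCa : 0 < Ca := hca.trans hcaCa
  obtain ⟨η, hη, hηa⟩ := h24 (ε * ca / 8) (by positivity)
  obtain ⟨p, hp⟩ := aux_net (α := α) η hη
  obtain ⟨k, hk⟩ : ∃ k : ℝ, k = (p.range.card : ℝ) := ⟨_, rfl⟩
  have hk0 : 0 ≤ k := by rw [hk]; positivity
  set t : ℝ := ε * ca / (4 * Ca * (k + 1)) with ht
  have ht0 : 0 < t := by positivity
  have htk : k * (t * Ca) ≤ ε * ca / 4 := by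
    have : k * (t * Ca) = ε * ca / 4 * (k / (k + 1)) := by
      rw [ht]; field_simp
    rw [this]
    have h1 : k / (k + 1) ≤ 1 := by rw [div_le_one (by positivity)]; linarith
    have h2 : 0 < ε * ca / 4 := by positivity
    nlinarith
  refine ⟨2 * k + 1, 2 * t ^ 2, by positivity, ?_⟩
  intro g hg hg0 hgi hg1 b hb hb0 hhb hhbpos N
  set ν := μ.withDensity fun x => ENNReal.ofReal (g x) with hν
  have : IsProbabilityMeasure ν := by
    refine ⟨?_⟩
    rw [hν, withDensity_apply _ MeasurableSet.univ, Measure.restrict_univ,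
      ← ofReal_integral_eq_lintegral_ofReal hgi (Filter.Eventually.of_forall hg0), hg1]
    simp
  rcases Nat.eq_zero_or_pos N with rfl | hN
  · refine prob_le_one.trans ?_
    rw [← ENNReal.ofReal_one]
    apply ENNReal.ofReal_le_ofReal
    simp [hk0]
  have hNr : (0:ℝ) < N := by exact_mod_cast hN
  have hφ : ∀ y, ∫ x', g x' * a x' y ∂μ = ∫ x', a x' y ∂ν := by
    intro y
    rw [hν, integral_withDensity_eq_integral_toReal_smul hg.ennreal_ofReal
      (Filter.Eventually.of_forall fun x => ENNReal.ofReal_lt_top)]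
    refine integral_congr_ae (Filter.Eventually.of_forall fun x => ?_)
    simp [ENNReal.toReal_ofReal (hg0 x)]
  simp_rw [hφ]
  have hay : ∀ y, Measurable fun x => a x y := fun y =>
    ha_meas.comp (measurable_id.prodMk measurable_const)
  have hax : ∀ x, Measurable (a x) := fun x =>
    ha_meas.comp (measurable_const.prodMk measurable_id)
  have iay : ∀ y, Integrable (fun x => a x y) ν := fun y =>
    Integrable.of_bound (hay y).aestronglyMeasurable (Ca * h y)
      (Filter.Eventually.of_forall fun x => by
        rw [Real.norm_of_nonneg (ha_nonneg x y)]; exact (h19 x y).2)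
  let I : α → α → ℝ := fun z => (p ⁻¹' {z}).indicator (fun _ => (1:ℝ))
  have hsub : {xs : Fin N → α | ε < ∫ x, |bayesOp μ (fun y => (N : ℝ)⁻¹ * ∑ i, a (xs i) y) b x
                - bayesOp μ (fun y => ∫ x', a x' y ∂ν) b x| ∂μ} ⊆
      ⋃ z ∈ p.range, {xs | t < |(N:ℝ)⁻¹ * ∑ i, I z (xs i) - ∫ x, I z x ∂ν|} := by
    intro xs hxs
    by_contra hcon
    simp only [Set.mem_iUnion, Set.mem_ofPred_eq, exists_prop, not_exists, not_and, not_lt] at hcon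
    simp only [Set.mem_ofPred_eq] at hxs
    refine absurd hxs (not_lt.2 ?_)
    have hB := aux_bayes μ h b (fun y => (N : ℝ)⁻¹ * ∑ i, a (xs i) y)
      (fun y => ∫ x', a x' y ∂ν) ca Ca (ε * ca / 2) hca hb hb0 hh_nonneg hhb hhbpos
      ((Finset.measurable_fun_sum _ fun i _ => hax (xs i)).const_mul _)
      (ha_meas.stronglyMeasurable.integral_prod_left).measurable
      ?_ ?_ ?_
    · refine hB.trans (le_of_eq ?_)
      field_simp
    · intro y
      have e : ∀ c : ℝ, c = (N:ℝ)⁻¹ * ∑ _i : Fin N, c := by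
        intro c; simp; field_simp
      constructor
      · rw [e (ca * h y)]
        exact mul_le_mul_of_nonneg_left (Finset.sum_le_sum fun i _ => (h19 _ _).1) (by positivity)
      · rw [e (Ca * h y)]
        exact mul_le_mul_of_nonneg_left (Finset.sum_le_sum fun i _ => (h19 _ _).2) (by positivity)
    · intro y
      constructor
      · have := integral_mono (μ := ν) (integrable_const (ca * h y)) (iay y) fun x => (h19 x y).1
        simpa using this
      · have := integral_mono (μ := ν) (iay y) (integrable_const (Ca * h y)) fun x => (h19 x y).2
        simpa using this
    · intro y
      have := aux_dev ν p (fun x => a x y) (hay y) (Ca * h y) (ε * ca / 8 * h y) t ht0.le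
        (fun x => by rw [abs_of_nonneg (ha_nonneg x y)]; exact (h19 x y).2)
        (fun x => hηa _ _ (hp x) y) N hN xs hcon
      refine this.trans ?_
      have h3 := mul_le_mul_of_nonneg_right htk (hh_nonneg y)
      rw [← hk]
      nlinarith
  refine (measure_mono hsub).trans ((measure_biUnion_finset_le _ _).trans ?_)
  refine (Finset.sum_le_card_nsmul _ _ (ENNReal.ofReal (2 * Real.exp (-(2 * t ^ 2) * N)))
    fun z _ => ?_).trans ?_
  · refine aux_hoeffding ν (I z)
      ((measurable_const).indicator (p.measurableSet_fiber z)) (fun x => ?_) t ht0 N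
    by_cases hx : x ∈ p ⁻¹' {z}
    · simp [I, Set.indicator_of_mem hx]
    · simp [I, Set.indicator_of_notMem hx]
  · rw [← ENNReal.ofReal_nsmul]
    apply ENNReal.ofReal_le_ofReal
    rw [nsmul_eq_mul, ← hk]
    have := Real.exp_pos (-(2 * t ^ 2) * N)
    nlinarith
end

section
/- (Theorem 3) Assume the state space is compact, the transition densities do not depend on t (a_t = a), and conditions (19), (20) and (24) hold. Then for every ε > 0 there exist constants c₁ and c₂ such that, for all times t and all sample sizes N, P[‖f^N_{t|t} − f_{t|t}‖₁ > ε] ≤ c₁ exp(−c₂ N). -/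
open MeasureTheory ProbabilityTheory

/-- The Markov operator `A_t*`. -/
noncomputable def markovOp {α : Type*} [MeasurableSpace α] (μ : Measure α)
    (a : α → α → ℝ) (f : α → ℝ) : α → ℝ :=
  fun x => ∫ x', f x' * a x' x ∂μ

/-- The true filter densities: `f_{0|0} = a_0` and
`f_{t|t} = B(A_t* f_{t-1|t-1}, b_t)` (the observations being absorbed into `b_t`). -/
noncomputable def trueFilter {α : Type*} [MeasurableSpace α] (μ : Measure α)
    (a0 : α → ℝ) (a : ℕ → α → α → ℝ) (b : ℕ → α → ℝ) : ℕ → α → ℝ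
  | 0 => a0
  | (t + 1) => bayesOp μ (markovOp μ (a (t + 1)) (trueFilter μ a0 a b t)) (b (t + 1))

/-- The particle filter densities: `f^N_{0|0} = a_0` and
`f^N_{t|t} = B(A_t* E_N(f^N_{t-1|t-1}), b_t)`, where `E_N` is the empirical
distribution of the particles `(X_{j,t-1})_{j≤N}` at time `t-1`. -/
noncomputable def particleFilter {α Ω : Type*} [MeasurableSpace α] (μ : Measure α)
    (a0 : α → ℝ) (a : ℕ → α → α → ℝ) (b : ℕ → α → ℝ)
    {N : ℕ} (X : ℕ → Fin N → Ω → α) : ℕ → Ω → α → ℝ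
  | 0 => fun _ => a0
  | (t + 1) => fun ω =>
      bayesOp μ (fun x => (N : ℝ)⁻¹ * ∑ j, a (t + 1) (X t j ω) x) (b (t + 1))

/-- The σ-field generated by the particles before time `t`. -/
def pastFiltration {α Ω : Type*} [MeasurableSpace α] [MeasurableSpace Ω]
    {N : ℕ} (X : ℕ → Fin N → Ω → α) (t : ℕ) : MeasurableSpace Ω :=
  ⨆ s : Fin t, MeasurableSpace.comap (fun ω => fun j : Fin N => X s j ω) inferInstance

/-! ### Deterministic part: ratio bounds -/

structure IsDens {α : Type*} [MeasurableSpace α] (μ : Measure α) (f : α → ℝ) : Prop where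
  meas : Measurable f
  nonneg : ∀ x, 0 ≤ f x
  int : Integrable f μ
  one : ∫ x, f x ∂μ = 1

structure IsPred {α : Type*} [MeasurableSpace α] (h : α → ℝ) (ca Ca : ℝ) (p : α → ℝ) : Prop where
  meas : Measurable p
  lo : ∀ x, ca * h x ≤ p x
  hi : ∀ x, p x ≤ Ca * h x

def RatioRel {α : Type*} (x : ℝ) (f g : α → ℝ) : Prop :=
  ∃ m : ℝ, 0 < m ∧ ∀ z, m * g z ≤ f z ∧ f z ≤ (1 + x) * m * g z

section det
variable {α : Type*} [MeasurableSpace α] {μ : Measure α}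

lemma RatioRel.mono {x y : ℝ} {f g : α → ℝ} (hxy : x ≤ y) (hg : ∀ z, 0 ≤ g z)
    (H : RatioRel x f g) : RatioRel y f g := by
  obtain ⟨m, hm, H⟩ := H
  refine ⟨m, hm, fun z => ⟨(H z).1, (H z).2.trans ?_⟩⟩
  have := hg z
  gcongr

lemma RatioRel.refl (f : α → ℝ) : RatioRel 0 f f :=
  ⟨1, one_pos, fun z => by simp⟩

lemma IsPred.nonneg {h p : α → ℝ} {ca Ca : ℝ} (hca : 0 < ca) (hh : ∀ x, 0 ≤ h x)
    (hp : IsPred h ca Ca p) (x : α) : 0 ≤ p x :=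
  (mul_nonneg hca.le (hh x)).trans (hp.lo x)

lemma IsPred.mul_int {h p b : α → ℝ} {ca Ca : ℝ} (hca : 0 < ca) (hh : ∀ x, 0 ≤ h x)
    (hp : IsPred h ca Ca p) (hb : Measurable b) (hb0 : ∀ x, 0 ≤ b x)
    (hint : Integrable (fun x => b x * h x) μ) : Integrable (fun x => p x * b x) μ := by
  refine (hint.const_mul Ca).mono' (hp.meas.mul hb).aestronglyMeasurable
    (Filter.Eventually.of_forall fun x => ?_)
  rw [Real.norm_of_nonneg (mul_nonneg (hp.nonneg hca hh x) (hb0 x))]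
  have := mul_le_mul_of_nonneg_right (hp.hi x) (hb0 x)
  linarith

lemma IsPred.mul_pos {h p b : α → ℝ} {ca Ca : ℝ} (hca : 0 < ca) (hh : ∀ x, 0 ≤ h x)
    (hp : IsPred h ca Ca p) (hb : Measurable b) (hb0 : ∀ x, 0 ≤ b x)
    (hint : Integrable (fun x => b x * h x) μ) (hpos : 0 < ∫ x, b x * h x ∂μ) :
    0 < ∫ x, p x * b x ∂μ := by
  have h1 : ∫ x, ca * (b x * h x) ∂μ ≤ ∫ x, p x * b x ∂μ := by
    refine integral_mono (hint.const_mul ca) (hp.mul_int hca hh hb hb0 hint) fun x => ?_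
    have := mul_le_mul_of_nonneg_right (hp.lo x) (hb0 x)
    simp only
    linarith
  rw [integral_const_mul] at h1
  exact (_root_.mul_pos hca hpos).trans_le h1

lemma IsPred.bayes {h p b : α → ℝ} {ca Ca : ℝ} (hca : 0 < ca) (hh : ∀ x, 0 ≤ h x)
    (hp : IsPred h ca Ca p) (hb : Measurable b) (hb0 : ∀ x, 0 ≤ b x)
    (hint : Integrable (fun x => b x * h x) μ) (hpos : 0 < ∫ x, b x * h x ∂μ) :
    IsDens μ (bayesOp μ p b) := by
  have hZ := hp.mul_pos hca hh hb hb0 hint hpos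
  refine ⟨(hp.meas.mul hb).div_const _, fun x => ?_, (hp.mul_int hca hh hb hb0 hint).div_const _, ?_⟩
  · exact div_nonneg (mul_nonneg (hp.nonneg hca hh x) (hb0 x)) hZ.le
  · simp only [bayesOp]
    rw [integral_div, div_self hZ.ne']

lemma IsDens.mul_int {h f : α → ℝ} {a : α → α → ℝ} {ca Ca : ℝ} (hca : 0 < ca)
    (hh : ∀ x, 0 ≤ h x)
    (ha_meas : Measurable (Function.uncurry a))
    (h19 : ∀ x' x, ca * h x ≤ a x' x ∧ a x' x ≤ Ca * h x)
    (hf : IsDens μ f) (x : α) : Integrable (fun x' => f x' * a x' x) μ := by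
  refine hf.int.mul_bdd (c := Ca * h x) (ha_meas.comp (by fun_prop : Measurable fun x' => (x', x))).aestronglyMeasurable
    (Filter.Eventually.of_forall fun x' => ?_)
  change ‖a x' x‖ ≤ _
  rw [Real.norm_of_nonneg]
  · exact (h19 x' x).2
  · exact (mul_nonneg hca.le (hh x)).trans (h19 x' x).1

lemma IsDens.markov [SigmaFinite μ] {h f : α → ℝ} {a : α → α → ℝ} {ca Ca : ℝ} (hca : 0 < ca)
    (hh : ∀ x, 0 ≤ h x)
    (ha_meas : Measurable (Function.uncurry a))
    (h19 : ∀ x' x, ca * h x ≤ a x' x ∧ a x' x ≤ Ca * h x)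
    (hf : IsDens μ f) : IsPred h ca Ca (markovOp μ a f) := by
  refine ⟨?_, fun x => ?_, fun x => ?_⟩
  · have : StronglyMeasurable (Function.uncurry fun x x' => f x' * a x' x) := by
      refine Measurable.stronglyMeasurable ?_
      exact (hf.meas.comp measurable_snd).mul (ha_meas.comp measurable_swap)
    exact this.integral_prod_right.measurable
  · have := integral_mono (hf.int.mul_const (ca * h x)) (hf.mul_int hca hh ha_meas h19 x)
      (fun x' => mul_le_mul_of_nonneg_left (h19 x' x).1 (hf.nonneg x'))
    rwa [integral_mul_const, hf.one, one_mul] at this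
  · have := integral_mono (hf.mul_int hca hh ha_meas h19 x) (hf.int.mul_const (Ca * h x))
      (fun x' => mul_le_mul_of_nonneg_left (h19 x' x).2 (hf.nonneg x'))
    rwa [integral_mul_const, hf.one, one_mul] at this

lemma emp_pred {h : α → ℝ} {a : α → α → ℝ} {ca Ca : ℝ}
    (ha_meas : Measurable (Function.uncurry a))
    (h19 : ∀ x' x, ca * h x ≤ a x' x ∧ a x' x ≤ Ca * h x) {N : ℕ} (hN : 0 < N)
    (X : Fin N → α) : IsPred h ca Ca (fun x => (N : ℝ)⁻¹ * ∑ j, a (X j) x) := by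
  have hN' : (0:ℝ) < N := by exact_mod_cast hN
  refine ⟨?_, fun x => ?_, fun x => ?_⟩
  · refine Measurable.const_mul (Finset.measurable_sum _ fun j _ => ?_) _
    exact ha_meas.comp (by fun_prop : Measurable fun x => (X j, x))
  · rw [inv_mul_eq_div, le_div_iff₀ hN']
    have := Finset.sum_le_sum (s := Finset.univ) fun j _ => (h19 (X j) x).1
    simp at this; linarith
  · rw [inv_mul_eq_div, div_le_iff₀ hN']
    have := Finset.sum_le_sum (s := Finset.univ) fun j _ => (h19 (X j) x).2
    simp at this; linarith

lemma rel_pred {h p q : α → ℝ} {ca Ca : ℝ} (hca : 0 < ca) (hCa : ca < Ca)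
    (hp : IsPred h ca Ca p) (hq : IsPred h ca Ca q) :
    RatioRel ((Ca / ca) ^ 2 - 1) p q := by
  have hC : 0 < Ca := hca.trans hCa
  refine ⟨ca / Ca, by positivity, fun z => ⟨?_, ?_⟩⟩
  · rw [div_mul_eq_mul_div, div_le_iff₀ hC]
    nlinarith [hp.lo z, hq.hi z]
  · have : (1 + ((Ca / ca) ^ 2 - 1)) * (ca / Ca) * q z = Ca * q z / ca := by
      field_simp; ring
    rw [this, le_div_iff₀ hca]
    nlinarith [hp.hi z, hq.lo z]

lemma RatioRel.bayes {p q b : α → ℝ} {x : ℝ} (hb0 : ∀ x, 0 ≤ b x)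
    (hp : 0 < ∫ x, p x * b x ∂μ) (hq : 0 < ∫ x, q x * b x ∂μ) (H : RatioRel x p q) :
    RatioRel x (bayesOp μ p b) (bayesOp μ q b) := by
  obtain ⟨m, hm, H⟩ := H
  refine ⟨m * (∫ x, q x * b x ∂μ) / (∫ x, p x * b x ∂μ), by positivity, fun z => ⟨?_, ?_⟩⟩
  · have e : m * (∫ x, q x * b x ∂μ) / (∫ x, p x * b x ∂μ) * bayesOp μ q b z
        = m * q z * b z / (∫ x, p x * b x ∂μ) := by
      simp only [bayesOp]; field_simp
    rw [e]
    exact div_le_div_of_nonneg_right (mul_le_mul_of_nonneg_right (H z).1 (hb0 z)) hp.le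
  · have e : (1 + x) * (m * (∫ x, q x * b x ∂μ) / (∫ x, p x * b x ∂μ)) * bayesOp μ q b z
        = (1 + x) * m * q z * b z / (∫ x, p x * b x ∂μ) := by
      simp only [bayesOp]; field_simp
    rw [e]
    exact div_le_div_of_nonneg_right (mul_le_mul_of_nonneg_right (H z).2 (hb0 z)) hp.le

lemma rel_bounds {f g : α → ℝ} {m M : ℝ} (hf : IsDens μ f) (hg : IsDens μ g)
    (H : ∀ z, m * g z ≤ f z ∧ f z ≤ M * g z) : m ≤ 1 ∧ 1 ≤ M := by
  have h1 := integral_mono (hg.int.const_mul m) hf.int fun z => (H z).1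
  have h2 := integral_mono hf.int (hg.int.const_mul M) fun z => (H z).2
  rw [integral_const_mul, hf.one, hg.one] at h1 h2
  constructor <;> linarith

lemma RatioRel.l1 {f g : α → ℝ} {x : ℝ} (hx : 0 ≤ x) (hf : IsDens μ f) (hg : IsDens μ g)
    (H : RatioRel x f g) : ∫ z, |f z - g z| ∂μ ≤ x := by
  obtain ⟨m, hm, H⟩ := H
  obtain ⟨h1, h2⟩ := rel_bounds hf hg H
  have := integral_mono (hf.int.sub hg.int).abs (hg.int.const_mul x) fun z => ?_
  · rw [integral_const_mul, hg.one, mul_one] at this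
    exact this
  · have hgz := hg.nonneg z
    simp only [Pi.sub_apply]
    rw [abs_le]
    constructor
    · have : (1 - x) * g z ≤ m * g z := by
        apply mul_le_mul_of_nonneg_right _ hgz
        nlinarith
      linarith [(H z).1]
    · have : (1 + x) * m * g z ≤ (1 + x) * g z := by
        apply mul_le_mul_of_nonneg_right _ hgz
        nlinarith
      linarith [(H z).2]

lemma RatioRel.markov [SigmaFinite μ] {h f g : α → ℝ} {a : α → α → ℝ} {ca Ca x : ℝ} (hca : 0 < ca)
    (hCa : ca < Ca) (hx : 0 ≤ x) (hh : ∀ x, 0 ≤ h x)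
    (ha_meas : Measurable (Function.uncurry a))
    (h19 : ∀ x' x, ca * h x ≤ a x' x ∧ a x' x ≤ Ca * h x)
    (hf : IsDens μ f) (hg : IsDens μ g) (H : RatioRel x f g) :
    RatioRel ((1 - ca / Ca) * x) (markovOp μ a f) (markovOp μ a g) := by
  obtain ⟨m, hm, H⟩ := H
  obtain ⟨h1, h2⟩ := rel_bounds hf hg H
  have hC : 0 < Ca := hca.trans hCa
  set γ := ca / Ca with hγ
  have hγ0 : 0 < γ := by positivity
  have hγ1 : γ < 1 := (div_lt_one hC).2 hCa
  have hgp := hg.markov hca hh ha_meas h19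
  have key : ∀ z, γ * markovOp μ a g z ≤ ca * h z := fun z => by
    rw [hγ, div_mul_eq_mul_div, div_le_iff₀ hC]
    nlinarith [hgp.hi z]
  have hfi := hf.mul_int hca hh ha_meas h19
  have hgi := hg.mul_int hca hh ha_meas h19
  have lo : ∀ z, (1 - m) * (ca * h z) ≤ markovOp μ a f z - m * markovOp μ a g z := fun z => by
    have := integral_mono ((hf.int.sub (hg.int.const_mul m)).mul_const (ca * h z))
      ((hfi z).sub ((hgi z).const_mul m)) fun x' => ?_
    · rw [integral_mul_const] at this
      simp only [Pi.sub_apply] at this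
      rw [integral_sub hf.int (hg.int.const_mul m), integral_sub (hfi z) ((hgi z).const_mul m),
        integral_const_mul, integral_const_mul, hf.one, hg.one, mul_one] at this
      exact this
    · simp only [Pi.sub_apply]
      have := mul_le_mul_of_nonneg_left (h19 x' z).1 (sub_nonneg.2 (H x').1)
      linarith
  have hi : ∀ z, ((1 + x) * m - 1) * (ca * h z)
      ≤ ((1 + x) * m) * markovOp μ a g z - markovOp μ a f z := fun z => by
    have := integral_mono (((hg.int.const_mul ((1 + x) * m)).sub hf.int).mul_const (ca * h z))
      (((hgi z).const_mul ((1 + x) * m)).sub (hfi z)) fun x' => ?_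
    · rw [integral_mul_const] at this
      simp only [Pi.sub_apply] at this
      rw [integral_sub (hg.int.const_mul _) hf.int, integral_sub ((hgi z).const_mul _) (hfi z),
        integral_const_mul, integral_const_mul, hf.one, hg.one, mul_one] at this
      exact this
    · simp only [Pi.sub_apply]
      have := mul_le_mul_of_nonneg_left (h19 x' z).1 (sub_nonneg.2 (H x').2)
      linarith
  have hgn := hgp.nonneg hca hh
  refine ⟨m + γ * (1 - m), by nlinarith, fun z => ⟨?_, ?_⟩⟩
  · have := mul_le_mul_of_nonneg_left (key z) (sub_nonneg.2 h1)
    linarith [lo z]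
  · have h3 := mul_le_mul_of_nonneg_left (key z) (sub_nonneg.2 h2)
    have h4 : ((1 + x) * m - γ * ((1 + x) * m - 1)) * markovOp μ a g z
        ≤ (1 + (1 - γ) * x) * (m + γ * (1 - m)) * markovOp μ a g z := by
      apply mul_le_mul_of_nonneg_right _ (hgn z)
      have : 0 ≤ (1 - γ) * x * γ * (1 - m) := by
        have := sub_nonneg.2 h1; have := sub_nonneg.2 hγ1.le; positivity
      linarith
    linarith [hi z]

lemma RatioRel.perturb {h p p' q : α → ℝ} {ca Ca δ θ y : ℝ}
    (hθ : 0 ≤ θ) (hθ1 : θ < 1) (hδ : δ ≤ θ * ca) (hh : ∀ x, 0 ≤ h x) (hp : IsPred h ca Ca p)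
    (hpp : ∀ z, |p' z - p z| ≤ δ * h z) (H : RatioRel y p q) :
    RatioRel ((1 + y) * ((1 + θ) / (1 - θ)) - 1) p' q := by
  obtain ⟨m, hm, H⟩ := H
  have h1 : 0 < 1 - θ := by linarith
  have key : ∀ z, |p' z - p z| ≤ θ * p z := fun z => by
    refine (hpp z).trans ?_
    have := mul_le_mul_of_nonneg_right hδ (hh z)
    have := mul_le_mul_of_nonneg_left (hp.lo z) hθ
    linarith
  refine ⟨m * (1 - θ), by positivity, fun z => ⟨?_, ?_⟩⟩
  · have := (abs_le.1 (key z)).1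
    have := mul_le_mul_of_nonneg_left (H z).1 h1.le
    linarith
  · have h2 := (abs_le.1 (key z)).2
    have h3 := mul_le_mul_of_nonneg_left (H z).2 (by linarith : 0 ≤ 1 + θ)
    have e : (1 + ((1 + y) * ((1 + θ) / (1 - θ)) - 1)) * (m * (1 - θ)) * q z
        = (1 + θ) * ((1 + y) * m * q z) := by field_simp; ring
    rw [e]; linarith

end det

/-! ### Concentration of the empirical frequencies -/

section conc
variable {α : Type*} [MeasurableSpace α] {μ : Measure α}
  {Ω : Type*} {m : MeasurableSpace Ω} [mΩ : MeasurableSpace Ω] {P : Measure Ω} [IsProbabilityMeasure P]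

lemma freq_bounds {f : α → ℝ} (hf : IsDens μ f) {C : Set α} (hC : MeasurableSet C) :
    Integrable (fun x => C.indicator (fun _ => (1:ℝ)) x * f x) μ ∧
    0 ≤ ∫ x, C.indicator (fun _ => (1:ℝ)) x * f x ∂μ ∧
    ∫ x, C.indicator (fun _ => (1:ℝ)) x * f x ∂μ ≤ 1 := by
  have hb : ∀ x, 0 ≤ C.indicator (fun _ => (1:ℝ)) x ∧ C.indicator (fun _ => (1:ℝ)) x ≤ 1 := fun x => by
    by_cases hx : x ∈ C <;> simp [hx]
  have hi : Integrable (fun x => C.indicator (fun _ => (1:ℝ)) x * f x) μ := by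
    refine hf.int.mono' ((measurable_const.indicator hC).mul hf.meas).aestronglyMeasurable
      (Filter.Eventually.of_forall fun x => ?_)
    rw [Real.norm_of_nonneg (mul_nonneg (hb x).1 (hf.nonneg x))]
    exact mul_le_of_le_one_left (hf.nonneg x) (hb x).2
  refine ⟨hi, integral_nonneg fun x => mul_nonneg (hb x).1 (hf.nonneg x), ?_⟩
  exact (integral_mono hi hf.int fun x =>
    mul_le_of_le_one_left (hf.nonneg x) (hb x).2).trans_eq hf.one

lemma exp_freq {f : α → ℝ} (hf : IsDens μ f) {C : Set α} (hC : MeasurableSet C) {l : ℝ}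
    (hl : |l| ≤ 1) :
    0 ≤ ∫ x, Real.exp (l * C.indicator (fun _ => (1:ℝ)) x) * f x ∂μ ∧
    ∫ x, Real.exp (l * C.indicator (fun _ => (1:ℝ)) x) * f x ∂μ
      ≤ Real.exp (l * (∫ x, C.indicator (fun _ => (1:ℝ)) x * f x ∂μ) + l ^ 2) := by
  obtain ⟨hi, h0, h1⟩ := freq_bounds hf hC
  refine ⟨integral_nonneg fun x => mul_nonneg (Real.exp_pos _).le (hf.nonneg x), ?_⟩
  have e : ∀ x, Real.exp (l * C.indicator (fun _ => (1:ℝ)) x) * f x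
      = f x + (Real.exp l - 1) * (C.indicator (fun _ => (1:ℝ)) x * f x) := fun x => by
    by_cases hx : x ∈ C <;> simp [hx] <;> ring
  simp_rw [e]
  rw [integral_add hf.int (hi.const_mul _), integral_const_mul, hf.one]
  set F := ∫ x, C.indicator (fun _ => (1:ℝ)) x * f x ∂μ
  have h2 := (abs_le.1 (Real.abs_exp_sub_one_sub_id_le hl)).2
  have h3 : (Real.exp l - 1) * F ≤ l * F + l ^ 2 := by nlinarith [sq_nonneg l]
  have h4 := Real.add_one_le_exp (l * F + l ^ 2)
  linarith

lemma mgf_bound (hm : m ≤ mΩ) {N : ℕ} (hN : 0 < N) {X : Fin N → Ω → α}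
    (hX : ∀ j, Measurable (X j)) {f : Ω → α → ℝ} (hf : ∀ ω, IsDens μ (f ω))
    (hcond : ∀ (φ : Fin N → α → ℝ), (∀ j, Measurable (φ j)) →
      (∀ j, ∃ C, ∀ x, |φ j x| ≤ C) →
      P[(fun ω => ∏ j, φ j (X j ω)) | m] =ᵐ[P] fun ω => ∏ j, ∫ x, φ j x * f ω x ∂μ)
    {C : Set α} (hC : MeasurableSet C) {l : ℝ} (hl : |l| ≤ 1) :
    Integrable (fun ω => Real.exp (l * (∑ j, C.indicator (fun _ => (1:ℝ)) (X j ω)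
      - N * ∫ x, C.indicator (fun _ => (1:ℝ)) x * f ω x ∂μ))) P ∧
    ∫ ω, Real.exp (l * (∑ j, C.indicator (fun _ => (1:ℝ)) (X j ω)
      - N * ∫ x, C.indicator (fun _ => (1:ℝ)) x * f ω x ∂μ)) ∂P ≤ Real.exp (N * l ^ 2) := by
  set i : α → ℝ := C.indicator (fun _ => (1:ℝ)) with hi
  have him : Measurable i := measurable_const.indicator hC
  have hib : ∀ x, 0 ≤ i x ∧ i x ≤ 1 := fun x => by
    by_cases hx : x ∈ C <;> simp [hi, hx]
  set F : Ω → ℝ := fun ω => ∫ x, i x * f ω x ∂μ with hF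
  have hFb : ∀ ω, 0 ≤ F ω ∧ F ω ≤ 1 := fun ω => (freq_bounds (hf ω) hC).2
  have hFm : AEStronglyMeasurable[m] F P := by
    have h1 := hcond (fun j x => if j = ⟨0, hN⟩ then i x else 1)
      (fun j => by by_cases hj : j = ⟨0, hN⟩ <;> simp [hj, him])
      (fun j => ⟨1, fun x => by
        by_cases hj : j = ⟨0, hN⟩
        · simp [hj, abs_of_nonneg (hib x).1, (hib x).2]
        · simp [hj]⟩)
    have h2 : (fun ω => ∏ j, ∫ x, (if j = (⟨0, hN⟩ : Fin N) then i x else 1) * f ω x ∂μ) = F := by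
      funext ω
      rw [Finset.prod_eq_single (⟨0, hN⟩ : Fin N)]
      · simp [hF]
      · intro j _ hj
        simp [hj, (hf ω).one]
      · simp
    rw [h2] at h1
    exact ⟨_, stronglyMeasurable_condExp, h1.symm⟩
  set G : Ω → ℝ := fun ω => Real.exp (-(l * N) * F ω) with hG
  have hGm : AEStronglyMeasurable[m] G P :=
    (Real.continuous_exp.comp (continuous_const.mul continuous_id)).comp_aestronglyMeasurable hFm
  have hGb : ∀ ω, ‖G ω‖ ≤ Real.exp N := fun ω => by
    rw [Real.norm_of_nonneg (Real.exp_pos _).le]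
    apply Real.exp_le_exp.2
    have h1 := abs_le.1 hl
    have hn : (0:ℝ) ≤ N := Nat.cast_nonneg _
    have : -(l * F ω) ≤ 1 := by nlinarith [hFb ω]
    nlinarith
  set g : Ω → ℝ := fun ω => ∏ j, Real.exp (l * i (X j ω)) with hg
  have hgm : Measurable g := Finset.measurable_prod _ fun j _ =>
    Real.measurable_exp.comp ((him.comp (hX j)).const_mul l)
  have hexpb : ∀ x, Real.exp (l * i x) ≤ Real.exp 1 := fun x => by
    apply Real.exp_le_exp.2
    have h1 := abs_le.1 hl
    nlinarith [hib x]
  have hgi : Integrable g P := by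
    refine Integrable.of_bound hgm.aestronglyMeasurable (Real.exp 1 ^ N)
      (Filter.Eventually.of_forall fun ω => ?_)
    rw [Real.norm_of_nonneg (Finset.prod_nonneg fun j _ => (Real.exp_pos _).le)]
    calc g ω ≤ ∏ j : Fin N, Real.exp 1 :=
          Finset.prod_le_prod (fun j _ => (Real.exp_pos _).le) fun j _ => hexpb _
      _ = _ := by simp
  have hfun : (fun ω => Real.exp (l * (∑ j, i (X j ω) - N * F ω))) = G * g := by
    funext ω
    simp only [hG, hg, Pi.mul_apply]
    rw [← Real.exp_sum, ← Real.exp_add, ← Finset.mul_sum]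
    congr 1; ring
  have hGg : Integrable (G * g) P := by
    refine hgi.bdd_mul (c := Real.exp N) (hGm.mono hm) (Filter.Eventually.of_forall hGb)
  have hce := condExp_mul_of_aestronglyMeasurable_left (m := m) hGm hGg hgi
  have hcd := hcond (fun _ x => Real.exp (l * i x))
    (fun _ => Real.measurable_exp.comp (him.const_mul l))
    (fun _ => ⟨Real.exp 1, fun x => by rw [abs_of_pos (Real.exp_pos _)]; exact hexpb x⟩)
  change (Integrable (fun ω => Real.exp (l * (∑ j, i (X j ω) - N * F ω))) P) ∧
    ∫ ω, Real.exp (l * (∑ j, i (X j ω) - N * F ω)) ∂P ≤ _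
  rw [hfun]
  refine ⟨hGg, ?_⟩
  rw [← integral_condExp hm]
  calc ∫ ω, (P[G * g | m]) ω ∂P ≤ ∫ ω, Real.exp (N * l ^ 2) ∂P := by
        refine integral_mono_ae integrable_condExp (integrable_const _) ?_
        filter_upwards [hce, hcd] with ω h1 h2
        rw [h1, Pi.mul_apply]
        change G ω * (P[g | m]) ω ≤ _
        rw [h2, Finset.prod_const, Finset.card_univ, Fintype.card_fin]
        obtain ⟨h3, h4⟩ := exp_freq (hf ω) hC hl
        have h5 := pow_le_pow_left₀ h3 h4 N
        rw [← Real.exp_nat_mul] at h5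
        calc G ω * (∫ x, Real.exp (l * i x) * f ω x ∂μ) ^ N
            ≤ G ω * Real.exp (N * (l * F ω + l ^ 2)) :=
              mul_le_mul_of_nonneg_left h5 (Real.exp_pos _).le
          _ = Real.exp (N * l ^ 2) := by
              rw [hG, ← Real.exp_add]; congr 1; ring
    _ = _ := by simp

lemma tail_bound (hm : m ≤ mΩ) {N : ℕ} (hN : 0 < N) {X : Fin N → Ω → α}
    (hX : ∀ j, Measurable (X j)) {f : Ω → α → ℝ} (hf : ∀ ω, IsDens μ (f ω))
    (hcond : ∀ (φ : Fin N → α → ℝ), (∀ j, Measurable (φ j)) →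
      (∀ j, ∃ C, ∀ x, |φ j x| ≤ C) →
      P[(fun ω => ∏ j, φ j (X j ω)) | m] =ᵐ[P] fun ω => ∏ j, ∫ x, φ j x * f ω x ∂μ)
    {C : Set α} (hC : MeasurableSet C) {η : ℝ} (hη : 0 < η) (hη1 : η ≤ 1) :
    P.real {ω | η ≤ |(N:ℝ)⁻¹ * ∑ j, C.indicator (fun _ => (1:ℝ)) (X j ω)
      - ∫ x, C.indicator (fun _ => (1:ℝ)) x * f ω x ∂μ|} ≤ 2 * Real.exp (-(η ^ 2 / 4) * N) := by
  have hN' : (0:ℝ) < N := by exact_mod_cast hN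
  set D : Ω → ℝ := fun ω => ∑ j, C.indicator (fun _ => (1:ℝ)) (X j ω)
      - N * ∫ x, C.indicator (fun _ => (1:ℝ)) x * f ω x ∂μ with hD
  have one : ∀ l : ℝ, |l| = η / 2 →
      P.real {ω | Real.exp (η / 2 * (N * η)) ≤ Real.exp (l * D ω)} ≤ Real.exp (-(η ^ 2 / 4) * N) := by
    intro l hl
    obtain ⟨h1, h2⟩ := mgf_bound hm hN hX hf hcond hC (l := l) (by linarith)
    have h3 := mul_meas_ge_le_integral_of_nonneg (μ := P)
      (Filter.Eventually.of_forall fun ω => (Real.exp_pos (l * D ω)).le) h1 (Real.exp (η / 2 * (N * η)))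
    have h4 := h3.trans h2
    rw [← sq_abs l, hl] at h4
    rw [mul_comm, ← le_div_iff₀ (Real.exp_pos _), ← Real.exp_sub] at h4
    refine h4.trans (le_of_eq ?_)
    congr 1; ring
  have hsub : {ω | η ≤ |(N:ℝ)⁻¹ * ∑ j, C.indicator (fun _ => (1:ℝ)) (X j ω)
      - ∫ x, C.indicator (fun _ => (1:ℝ)) x * f ω x ∂μ|} ⊆
      {ω | Real.exp (η / 2 * (N * η)) ≤ Real.exp ((η / 2) * D ω)} ∪
      {ω | Real.exp (η / 2 * (N * η)) ≤ Real.exp (-(η / 2) * D ω)} := by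
    intro ω hω
    have e : (N:ℝ)⁻¹ * ∑ j, C.indicator (fun _ => (1:ℝ)) (X j ω)
      - ∫ x, C.indicator (fun _ => (1:ℝ)) x * f ω x ∂μ = D ω / N := by
      simp only [hD]; field_simp
    rw [Set.mem_ofPred_eq, e, abs_div, abs_of_pos hN', le_div_iff₀ hN', le_abs'] at hω
    simp only [Set.mem_union, Set.mem_ofPred_eq, Real.exp_le_exp]
    rcases hω with hω | hω
    · right; nlinarith
    · left; nlinarith
  refine (measureReal_mono hsub).trans ((measureReal_union_le _ _).trans ?_)
  have := one (η / 2) (abs_of_pos (by positivity))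
  have := one (-(η / 2)) (by rw [abs_neg]; exact abs_of_pos (by positivity))
  linarith

end conc

/-! ### Discretisation of the compact state space -/

lemma exists_simple {α : Type*} [MeasurableSpace α] [MetricSpace α] [CompactSpace α]
    [BorelSpace α] [Nonempty α] {η : ℝ} (hη : 0 < η) :
    ∃ π : SimpleFunc α α, ∀ x, dist x (π x) < η := by
  let e := TopologicalSpace.denseSeq α
  have hcov : (Set.univ : Set α) ⊆ ⋃ k, Metric.ball (e k) η := fun x _ => by
    obtain ⟨k, hy⟩ := (TopologicalSpace.denseRange_denseSeq α).exists_dist_lt x hη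
    exact Set.mem_iUnion.2 ⟨k, hy⟩
  obtain ⟨t, ht⟩ := isCompact_univ.elim_finite_subcover _ (fun _ => Metric.isOpen_ball) hcov
  refine ⟨SimpleFunc.nearestPt e (t.sup id), fun x => ?_⟩
  obtain ⟨k, hk, hx⟩ := Set.mem_iUnion₂.1 (ht (Set.mem_univ x))
  have h1 := SimpleFunc.edist_nearestPt_le e x (Finset.le_sup (f := id) hk)
  rw [edist_dist, edist_dist, ENNReal.ofReal_le_ofReal_iff dist_nonneg] at h1
  rw [dist_comm]
  rw [Metric.mem_ball, dist_comm] at hx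
  exact lt_of_le_of_lt h1 hx

lemma emp_close {α : Type*} [MeasurableSpace α] {μ : Measure α}
    {h f : α → ℝ} {a : α → α → ℝ} {ca Ca : ℝ} (hca : 0 < ca)
    (hh : ∀ x, 0 ≤ h x)
    (ha_meas : Measurable (Function.uncurry a))
    (h19 : ∀ x' x, ca * h x ≤ a x' x ∧ a x' x ≤ Ca * h x)
    (hf : IsDens μ f) (π : SimpleFunc α α) {δ η : ℝ}
    (hπ : ∀ x z, |a x z - a (π x) z| ≤ δ * h z) {N : ℕ} (hN : 0 < N) (X : Fin N → α)
    (hX : ∀ y ∈ π.range, |(N:ℝ)⁻¹ * ∑ j, (π ⁻¹' {y}).indicator (fun _ => (1:ℝ)) (X j)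
      - ∫ x, (π ⁻¹' {y}).indicator (fun _ => (1:ℝ)) x * f x ∂μ| ≤ η) (z : α) :
    |(N:ℝ)⁻¹ * ∑ j, a (X j) z - markovOp μ a f z|
      ≤ (2 * δ + Ca * (π.range.card * η)) * h z := by
  have hN' : (0:ℝ) < N := by exact_mod_cast hN
  have hrep : ∀ x, a (π x) z
      = ∑ y ∈ π.range, (π ⁻¹' {y}).indicator (fun _ => (1:ℝ)) x * a y z := fun x => by
    rw [Finset.sum_eq_single (π x)]
    · simp
    · intro y _ hy
      have : x ∉ π ⁻¹' {y} := fun hx => hy (by simpa using hx.symm)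
      simp [this]
    · intro hx; exact absurd (π.mem_range_self x) hx
  have hfi : ∀ y, Integrable (fun x => (π ⁻¹' {y}).indicator (fun _ => (1:ℝ)) x * f x) μ :=
    fun y => (freq_bounds hf (π.measurableSet_fiber y)).1
  have hrep2 : ∀ x, f x * a (π x) z
      = ∑ y ∈ π.range, ((π ⁻¹' {y}).indicator (fun _ => (1:ℝ)) x * f x) * a y z := fun x => by
    rw [hrep, Finset.mul_sum]
    exact Finset.sum_congr rfl fun y _ => by ring
  have hpi : Integrable (fun x => f x * a (π x) z) μ := by
    simp_rw [hrep2]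
    exact integrable_finsetSum _ fun y _ => (hfi y).mul_const _
  have hmid : ∫ x, f x * a (π x) z ∂μ
      = ∑ y ∈ π.range, (∫ x, (π ⁻¹' {y}).indicator (fun _ => (1:ℝ)) x * f x ∂μ) * a y z := by
    simp_rw [hrep2]
    rw [integral_finsetSum _ fun y _ => (hfi y).mul_const _]
    simp_rw [integral_mul_const]
  have hemp : (N:ℝ)⁻¹ * ∑ j, a (π (X j)) z
      = ∑ y ∈ π.range, ((N:ℝ)⁻¹ * ∑ j, (π ⁻¹' {y}).indicator (fun _ => (1:ℝ)) (X j)) * a y z := by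
    simp_rw [hrep]
    rw [Finset.sum_comm, Finset.mul_sum]
    exact Finset.sum_congr rfl fun y _ => by rw [← Finset.sum_mul, mul_assoc]
  have hb1 : |(N:ℝ)⁻¹ * ∑ j, a (X j) z - (N:ℝ)⁻¹ * ∑ j, a (π (X j)) z| ≤ δ * h z := by
    rw [← mul_sub, ← Finset.sum_sub_distrib, abs_mul, abs_of_pos (inv_pos.2 hN'), inv_mul_eq_div,
      div_le_iff₀ hN']
    refine (Finset.abs_sum_le_sum_abs _ _).trans ?_
    have := Finset.sum_le_sum (s := Finset.univ) fun j _ => hπ (X j) z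
    simp at this; linarith
  have hb2 : |∫ x, f x * a (π x) z ∂μ - markovOp μ a f z| ≤ δ * h z := by
    have hai := hf.mul_int hca hh ha_meas h19 z
    rw [markovOp, ← integral_sub hpi hai]
    refine (abs_integral_le_integral_abs).trans ?_
    have := integral_mono (hpi.sub hai).abs (hf.int.mul_const (δ * h z)) fun x => ?_
    · rw [integral_mul_const, hf.one, one_mul] at this
      exact this
    · simp only [Pi.sub_apply]
      rw [← mul_sub, abs_mul, abs_of_nonneg (hf.nonneg x), abs_sub_comm]
      exact mul_le_mul_of_nonneg_left (hπ x z) (hf.nonneg x)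
  have hb3 : |(N:ℝ)⁻¹ * ∑ j, a (π (X j)) z - ∫ x, f x * a (π x) z ∂μ|
      ≤ Ca * (π.range.card * η) * h z := by
    rw [hemp, hmid, ← Finset.sum_sub_distrib]
    refine (Finset.abs_sum_le_sum_abs _ _).trans ?_
    have : ∀ y ∈ π.range, |((N:ℝ)⁻¹ * ∑ j, (π ⁻¹' {y}).indicator (fun _ => (1:ℝ)) (X j)) * a y z
        - (∫ x, (π ⁻¹' {y}).indicator (fun _ => (1:ℝ)) x * f x ∂μ) * a y z| ≤ η * (Ca * h z) := by
      intro y hy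
      have hay : 0 ≤ a y z := (mul_nonneg hca.le (hh z)).trans (h19 y z).1
      rw [← sub_mul, abs_mul, abs_of_nonneg hay]
      exact mul_le_mul (hX y hy) (h19 y z).2 hay ((abs_nonneg _).trans (hX y hy))
    refine (Finset.sum_le_sum this).trans (le_of_eq ?_)
    rw [Finset.sum_const, nsmul_eq_mul]; ring
  calc |(N:ℝ)⁻¹ * ∑ j, a (X j) z - markovOp μ a f z|
      ≤ |(N:ℝ)⁻¹ * ∑ j, a (X j) z - (N:ℝ)⁻¹ * ∑ j, a (π (X j)) z|
        + |(N:ℝ)⁻¹ * ∑ j, a (π (X j)) z - ∫ x, f x * a (π x) z ∂μ|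
        + |∫ x, f x * a (π x) z ∂μ - markovOp μ a f z| := by
        refine (abs_sub_le _ (∫ x, f x * a (π x) z ∂μ) _).trans ?_
        gcongr
        exact abs_sub_le _ _ _
    _ ≤ _ := by linarith

/-- Theorem 3: if the state space is compact, the transition densities do not depend
on `t`, and conditions (19) (`c_a h ≤ a(x',·) ≤ C_a h`), (20) (`0 < ∫ b_t h dμ < ∞`)
and (24) (`Δ(x',x) = sup_{x''}|a(x,x'')−a(x',x'')|/h(x'') → 0` as `d(x,x') → 0`)
hold, then for every `ε > 0` there are constants `c₁, c₂` such that for all times `t`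
and all sample sizes `N`, `P[‖f^N_{t|t} − f_{t|t}‖₁ > ε] ≤ c₁ exp(−c₂ N)`. -/
theorem particle_filter_uniform_exponential_bound_compact
    {α : Type*} [MeasurableSpace α] [MetricSpace α] [CompactSpace α] [BorelSpace α]
    (μ : Measure α) [SigmaFinite μ]
    {Ω : Type*} [MeasurableSpace Ω] (P : Measure Ω) [IsProbabilityMeasure P]
    (a0 : α → ℝ) (a : α → α → ℝ) (b : ℕ → α → ℝ) (h : α → ℝ)
    (ca Ca : ℝ) (hca : 0 < ca) (hcaCa : ca < Ca)
    (ha0_meas : Measurable a0) (ha0_nonneg : ∀ x, 0 ≤ a0 x)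
    (ha0_int : Integrable a0 μ) (ha0_one : (∫ x, a0 x ∂μ) = 1)
    (ha_meas : Measurable (Function.uncurry a))
    (ha_nonneg : ∀ x' x, 0 ≤ a x' x)
    (ha_kernel : ∀ x', ∫ x, a x' x ∂μ = 1)
    (hh_meas : Measurable h) (hh_nonneg : ∀ x, 0 ≤ h x)
    (hh_int : Integrable h μ) (hh_one : (∫ x, h x ∂μ) = 1)
    (h19 : ∀ x' x, ca * h x ≤ a x' x ∧ a x' x ≤ Ca * h x)
    (h24 : ∀ δ > (0:ℝ), ∃ η > (0:ℝ), ∀ x x', dist x x' < η →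
      ∀ x'', |a x x'' - a x' x''| ≤ δ * h x'')
    (hb_meas : ∀ t, Measurable (b t))
    (hb_nonneg : ∀ t x, 0 ≤ b t x)
    (h20_pos : ∀ t, 0 < ∫ x, b t x * h x ∂μ)
    (h20_int : ∀ t, Integrable (fun x => b t x * h x) μ)
    -- the particle system
    (X : (N : ℕ) → ℕ → Fin N → Ω → α)
    (hX_meas : ∀ N t j, Measurable (X N t j))
    -- conditionally on the past, (X N t j)_j is an i.i.d. sample from f^N_{t|t}
    (hcond : ∀ (N t : ℕ) (φ : Fin N → α → ℝ), (∀ j, Measurable (φ j)) →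
      (∀ j, ∃ C, ∀ x, |φ j x| ≤ C) →
      P[(fun ω => ∏ j, φ j (X N t j ω)) | pastFiltration (X N) t]
        =ᵐ[P] fun ω => ∏ j, ∫ x, φ j x
          * particleFilter μ a0 (fun _ => a) b (X N) t ω x ∂μ) :
    ∀ ε : ℝ, 0 < ε → ∃ c₁ c₂ : ℝ, 0 < c₂ ∧ ∀ t N : ℕ,
      P {ω | ε < ∫ x, |particleFilter μ a0 (fun _ => a) b (X N) t ω x
            - trueFilter μ a0 (fun _ => a) b t x| ∂μ}
        ≤ ENNReal.ofReal (c₁ * Real.exp (-c₂ * N)) := by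
  intro ε hε
  have hne : Nonempty α := by
    by_contra hcon
    rw [not_nonempty_iff] at hcon
    have : (∫ x, a0 x ∂μ) = 0 := by simp [Measure.eq_zero_of_isEmpty μ]
    linarith
  have hC : 0 < Ca := hca.trans hcaCa
  obtain ⟨γ, hγ⟩ : ∃ γ, γ = ca / Ca := ⟨_, rfl⟩
  have hγ0 : 0 < γ := by rw [hγ]; positivity
  have hγ1 : γ < 1 := by rw [hγ]; exact (div_lt_one hC).2 hcaCa
  have ha0 : IsDens μ a0 := ⟨ha0_meas, ha0_nonneg, ha0_int, ha0_one⟩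
  -- the true filter consists of densities
  have hT : ∀ t, IsDens μ (trueFilter μ a0 (fun _ => a) b t) := by
    intro t
    induction t with
    | zero => exact ha0
    | succ t ih =>
      exact (ih.markov hca hh_nonneg ha_meas h19).bayes hca hh_nonneg (hb_meas _) (hb_nonneg _)
        (h20_int _) (h20_pos _)
  have hE : ∀ N : ℕ, 0 < N → ∀ t ω, IsPred h ca Ca
      (fun x => (N : ℝ)⁻¹ * ∑ j, a (X N t j ω) x) := fun N hN t ω =>
    emp_pred ha_meas h19 hN fun j => X N t j ω
  have hF : ∀ N : ℕ, 0 < N → ∀ t ω, IsDens μ (particleFilter μ a0 (fun _ => a) b (X N) t ω) := by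
    intro N hN t ω
    cases t with
    | zero => exact ha0
    | succ t =>
      exact (hE N hN t ω).bayes hca hh_nonneg (hb_meas _) (hb_nonneg _) (h20_int _) (h20_pos _)
  have hTp : ∀ t, IsPred h ca Ca (markovOp μ a (trueFilter μ a0 (fun _ => a) b t)) := fun t =>
    (hT t).markov hca hh_nonneg ha_meas h19
  have hpos : ∀ (p : α → ℝ) (t : ℕ), IsPred h ca Ca p → 0 < ∫ x, p x * b t x ∂μ := fun p t hp =>
    hp.mul_pos hca hh_nonneg (hb_meas _) (hb_nonneg _) (h20_int _) (h20_pos _)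
  -- the crude bound
  obtain ⟨x0, hx0⟩ : ∃ x0, x0 = (Ca / ca) ^ 2 - 1 := ⟨_, rfl⟩
  have hx0n : 0 ≤ x0 := by
    have : 1 < Ca / ca := (one_lt_div hca).2 hcaCa
    rw [hx0]; nlinarith
  have hcrude : ∀ N : ℕ, 0 < N → ∀ t ω, RatioRel x0 (particleFilter μ a0 (fun _ => a) b (X N) t ω)
      (trueFilter μ a0 (fun _ => a) b t) := by
    intro N hN t ω
    cases t with
    | zero => exact (RatioRel.refl a0).mono hx0n ha0_nonneg
    | succ t =>
      have h1 := rel_pred hca hcaCa (hE N hN t ω) (hTp t)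
      rw [← hx0] at h1
      exact h1.bayes (hb_nonneg _) (hpos _ _ (hE N hN t ω)) (hpos _ _ (hTp t))
  -- constants
  obtain ⟨e, he⟩ : ∃ e, e = ε / 2 := ⟨_, rfl⟩
  have he0 : 0 < e := by rw [he]; positivity
  obtain ⟨θ, hθ⟩ : ∃ θ, θ = min (γ / 8) (γ * e / 8) := ⟨_, rfl⟩
  have hθ0 : 0 < θ := by rw [hθ]; exact lt_min (by positivity) (by positivity)
  have hθ1 : θ ≤ γ / 8 := by rw [hθ]; exact min_le_left _ _
  have hθ2 : θ ≤ γ * e / 8 := by rw [hθ]; exact min_le_right _ _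
  have hκ : (1 + θ) / (1 - θ) ≤ 1 + 4 * θ := by
    rw [div_le_iff₀ (by linarith)]
    nlinarith
  -- one step
  have hstep : ∀ N : ℕ, 0 < N → ∀ t ω y, 0 ≤ y →
      (∀ z, |(N:ℝ)⁻¹ * ∑ j, a (X N t j ω) z
        - markovOp μ a (particleFilter μ a0 (fun _ => a) b (X N) t ω) z| ≤ (θ * ca) * h z) →
      RatioRel y (particleFilter μ a0 (fun _ => a) b (X N) t ω)
        (trueFilter μ a0 (fun _ => a) b t) →
      RatioRel ((1 - γ / 2) * y + γ / 2 * e)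
        (particleFilter μ a0 (fun _ => a) b (X N) (t + 1) ω)
        (trueFilter μ a0 (fun _ => a) b (t + 1)) := by
    intro N hN t ω y hy hgood H
    have h1 := H.markov hca hcaCa hy hh_nonneg ha_meas h19 (hF N hN t ω) (hT t)
    have h2 := h1.perturb (p' := fun z => (N:ℝ)⁻¹ * ∑ j, a (X N t j ω) z) hθ0.le (by linarith)
      le_rfl hh_nonneg ((hF N hN t ω).markov hca hh_nonneg ha_meas h19) hgood
    have h3 := h2.bayes (hb_nonneg (t + 1)) (hpos _ _ (hE N hN t ω)) (hpos _ _ (hTp t))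
    refine RatioRel.mono ?_ (hT (t + 1)).nonneg h3
    rw [← hγ]
    have h5 : 0 ≤ 1 + (1 - γ) * y := by nlinarith
    have h6 := mul_le_mul_of_nonneg_left hκ h5
    have h7 : (1 - γ) * y * (4 * θ) ≤ (1 - γ) * y * (γ / 2) := by
      apply mul_le_mul_of_nonneg_left (by linarith)
      exact mul_nonneg (by linarith) hy
    have h8 : 0 ≤ γ ^ 2 * y := by positivity
    nlinarith
  have hsteps : ∀ N : ℕ, 0 < N → ∀ s ω y, 0 ≤ y → RatioRel y
        (particleFilter μ a0 (fun _ => a) b (X N) s ω) (trueFilter μ a0 (fun _ => a) b s) →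
      ∀ k, (∀ i < k, ∀ z, |(N:ℝ)⁻¹ * ∑ j, a (X N (s + i) j ω) z
        - markovOp μ a (particleFilter μ a0 (fun _ => a) b (X N) (s + i) ω) z| ≤ (θ * ca) * h z) →
      RatioRel ((1 - γ / 2) ^ k * y + e)
        (particleFilter μ a0 (fun _ => a) b (X N) (s + k) ω)
        (trueFilter μ a0 (fun _ => a) b (s + k)) := by
    intro N hN s ω y hy H k
    induction k with
    | zero =>
      intro _
      refine RatioRel.mono ?_ (hT s).nonneg H
      simp; linarith
    | succ k ih =>
      intro hgood
      have h1 := ih fun i hi => hgood i (by omega)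
      have h0 : 0 < 1 - γ / 2 := by linarith
      have h2 := hstep N hN (s + k) ω _ (by positivity) (hgood k (by omega)) h1
      refine RatioRel.mono (le_of_eq ?_) (hT (s + (k + 1))).nonneg h2
      rw [pow_succ]; ring
  -- number of steps
  obtain ⟨n, hn⟩ : ∃ n : ℕ, (1 - γ / 2) ^ n * x0 ≤ e := by
    obtain ⟨n, hn⟩ := exists_pow_lt_of_lt_one (show 0 < e / (x0 + 1) by positivity)
      (show 1 - γ / 2 < 1 by linarith)
    refine ⟨n, ?_⟩
    rw [lt_div_iff₀ (by positivity)] at hn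
    have : 0 < (1 - γ / 2) ^ n := pow_pos (by linarith) _
    nlinarith
  -- discretisation
  obtain ⟨r, hr, hr2⟩ := h24 (θ * ca / 4) (by positivity)
  obtain ⟨π, hπ⟩ := exists_simple (α := α) hr
  obtain ⟨η, hη⟩ : ∃ η, η = min 1 (θ * ca / 2 / (Ca * (π.range.card + 1))) := ⟨_, rfl⟩
  have hη0 : 0 < η := by rw [hη]; exact lt_min one_pos (by positivity)
  have hη1 : η ≤ 1 := by rw [hη]; exact min_le_left _ _
  have hη2 : Ca * (π.range.card * η) ≤ θ * ca / 2 := by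
    have h1 : η ≤ θ * ca / 2 / (Ca * (π.range.card + 1)) := by rw [hη]; exact min_le_right _ _
    rw [le_div_iff₀ (by positivity)] at h1
    nlinarith [mul_pos hC hη0]
  obtain ⟨bad, hbad⟩ : ∃ bad : ℕ → ℕ → α → Set Ω, bad = fun (N : ℕ) (t : ℕ) (y : α) =>
      {ω | η ≤ |(N:ℝ)⁻¹ * ∑ j, (π ⁻¹' {y}).indicator (fun _ => (1:ℝ)) (X N t j ω)
      - ∫ x, (π ⁻¹' {y}).indicator (fun _ => (1:ℝ)) x *
          particleFilter μ a0 (fun _ => a) b (X N) t ω x ∂μ|} := ⟨_, rfl⟩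
  have hpast : ∀ N t, pastFiltration (X N) t ≤ (inferInstance : MeasurableSpace Ω) := fun N t =>
    iSup_le fun s => (measurable_pi_lambda _ fun j => hX_meas N s j).comap_le
  have hbadP : ∀ N : ℕ, 0 < N → ∀ t y, P.real (bad N t y) ≤ 2 * Real.exp (-(η ^ 2 / 4) * N) := by
    intro N hN t y
    rw [hbad]
    exact tail_bound (hpast N t) hN (hX_meas N t) (hF N hN t) (hcond N t)
      (π.measurableSet_fiber y) hη0 hη1
  have hgood : ∀ N : ℕ, 0 < N → ∀ t ω, (∀ y ∈ π.range, ω ∉ bad N t y) →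
      ∀ z, |(N:ℝ)⁻¹ * ∑ j, a (X N t j ω) z
        - markovOp μ a (particleFilter μ a0 (fun _ => a) b (X N) t ω) z| ≤ (θ * ca) * h z := by
    intro N hN t ω hω z
    refine (emp_close hca hh_nonneg ha_meas h19 (hF N hN t ω) π
      (fun x z => hr2 x (π x) (hπ x) z) hN (fun j => X N t j ω) (η := η) (fun y hy => ?_) z).trans ?_
    · have := hω y hy
      simp only [hbad, Set.mem_ofPred_eq, not_le] at this
      exact this.le
    · exact mul_le_mul_of_nonneg_right (by linarith) (hh_nonneg z)
  refine ⟨n * (π.range.card * 2) + 1, η ^ 2 / 4, by positivity, fun t N => ?_⟩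
  rcases Nat.eq_zero_or_pos N with hN | hN
  · subst hN
    refine prob_le_one.trans ?_
    rw [ENNReal.one_le_ofReal]
    simp only [Nat.cast_zero, mul_zero, Real.exp_zero, mul_one]
    have : (0:ℝ) ≤ n * (π.range.card * 2) := by positivity
    linarith
  -- the start of the window
  obtain ⟨s, k, y, hst, hkn, hy0, hyrel, hyk⟩ : ∃ (s k : ℕ) (y : ℝ), s + k = t ∧ k ≤ n ∧ 0 ≤ y ∧
      (∀ ω, RatioRel y (particleFilter μ a0 (fun _ => a) b (X N) s ω)
        (trueFilter μ a0 (fun _ => a) b s)) ∧ (1 - γ / 2) ^ k * y ≤ e := by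
    rcases le_total t n with htn | htn
    · exact ⟨0, t, 0, by simp, htn, le_rfl, fun ω => RatioRel.refl a0, by simpa using he0.le⟩
    · exact ⟨t - n, n, x0, by omega, le_rfl, hx0n, hcrude N hN _, hn⟩
  have hsub : {ω | ε < ∫ x, |particleFilter μ a0 (fun _ => a) b (X N) t ω x
            - trueFilter μ a0 (fun _ => a) b t x| ∂μ} ⊆
      ⋃ i ∈ Finset.range k, ⋃ y ∈ π.range, bad N (s + i) y := by
    intro ω hω
    by_contra hcon
    simp only [Set.mem_iUnion, not_exists] at hcon
    have h1 := hsteps N hN s ω y hy0 (hyrel ω) k fun i hi =>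
      hgood N hN (s + i) ω fun y hy => hcon i (Finset.mem_range.2 hi) y hy
    rw [hst] at h1
    have h0 : 0 < 1 - γ / 2 := by linarith
    have h2 := h1.l1 (by positivity) (hF N hN t ω) (hT t)
    rw [Set.mem_ofPred_eq] at hω
    linarith
  have hreal : P.real (⋃ i ∈ Finset.range k, ⋃ y ∈ π.range, bad N (s + i) y)
      ≤ (n * (π.range.card * 2) + 1) * Real.exp (-(η ^ 2 / 4) * N) := by
    have hexp := Real.exp_pos (-(η ^ 2 / 4) * N)
    calc P.real (⋃ i ∈ Finset.range k, ⋃ y ∈ π.range, bad N (s + i) y)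
        ≤ ∑ i ∈ Finset.range k, P.real (⋃ y ∈ π.range, bad N (s + i) y) :=
          measureReal_biUnion_finset_le _ _
      _ ≤ ∑ i ∈ Finset.range k, ∑ y ∈ π.range, P.real (bad N (s + i) y) :=
          Finset.sum_le_sum fun i _ => measureReal_biUnion_finset_le _ _
      _ ≤ ∑ i ∈ Finset.range k, ∑ y ∈ π.range, 2 * Real.exp (-(η ^ 2 / 4) * N) :=
          Finset.sum_le_sum fun i _ => Finset.sum_le_sum fun y _ => hbadP N hN _ _
      _ = k * (π.range.card * 2) * Real.exp (-(η ^ 2 / 4) * N) := by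
          simp only [Finset.sum_const, nsmul_eq_mul, Finset.card_range]; ring
      _ ≤ _ := by
          have : (k:ℝ) ≤ n := by exact_mod_cast hkn
          apply mul_le_mul_of_nonneg_right _ hexp.le
          have : (k:ℝ) * (π.range.card * 2) ≤ n * (π.range.card * 2) := by gcongr
          linarith
  refine (measure_mono hsub).trans ?_
  rw [← ofReal_measureReal (measure_ne_top P _)]
  exact ENNReal.ofReal_le_ofReal hreal
end

section
/- The asymptotic variance V_t of the particle filter with i.i.d. resampling, defined by V_0(ψ) = σ_0²(ψ) and V_t(ψ) = σ_t²(ψ) + p(y_t | y_{1:t-1})^{-2} V_{t-1}(L_t(ψ − m_t(ψ))), admits the representation V_t(ψ) = σ_t²(ψ) + Σ_{s=1}^t σ_{s-1}²( L_{s:t}(ψ − m_t(ψ)) ) / p(y_{s:t} | y_{1:s-1})², where L_{s:t} ψ(x_{s-1}) = ∫ ψ(x_t) ∏_{r=s}^t a_r(x_{r-1}, x_r) b_r(x_r, y_r) dμ(x_r) and p(y_{s:t} | y_{1:s-1}) = m_{s-1}(L_{s:t} 1). In particular this representation uses the identity m_{t-1}(L_t(ψ − m_t(ψ))) = 0. 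-/
open MeasureTheory

/-- The operator `L_t ψ(x_{t-1}) = ∫ a_t(x_{t-1}, x_t) b_t(x_t, y_t) ψ(x_t) dμ(x_t)`. -/
noncomputable def obsOp {α : Type*} [MeasurableSpace α] (μ : Measure α)
    (a : ℕ → α → α → ℝ) (b : ℕ → α → ℝ) (t : ℕ) (ψ : α → ℝ) : α → ℝ :=
  fun x => ∫ x', a t x x' * (b t x' * ψ x') ∂μ

/-- The iterated operator: `obsOpComp μ a b n s = L_s ∘ L_{s+1} ∘ ⋯ ∘ L_{s+n-1}`,
so that `L_{s:t} = obsOpComp μ a b (t+1-s) s` for `s ≤ t`: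
`L_{s:t}ψ(x_{s-1}) = ∫ ψ(x_t) ∏_{r=s}^t a_r(x_{r-1},x_r) b_r(x_r,y_r) dμ(x_r)`. -/
noncomputable def obsOpComp {α : Type*} [MeasurableSpace α] (μ : Measure α)
    (a : ℕ → α → α → ℝ) (b : ℕ → α → ℝ) : ℕ → ℕ → (α → ℝ) → α → ℝ
  | 0, _, ψ => ψ
  | (n + 1), s, ψ => obsOp μ a b s (obsOpComp μ a b n (s + 1) ψ)

/-- Joint integrability of `f(x) a(x,x') g(x')`. -/
theorem joint_integrable {α : Type*} [MeasurableSpace α] (μ : Measure α) [SigmaFinite μ]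
    (a : α → α → ℝ) (f g : α → ℝ)
    (ha_meas : Measurable (Function.uncurry a))
    (ha_nonneg : ∀ x' x, 0 ≤ a x' x)
    (ha_kernel : ∀ x', ∫ x, a x' x ∂μ = 1)
    (hf : Integrable f μ) (hg : Measurable g) (hgb : ∃ C, ∀ x, |g x| ≤ C) :
    Integrable (fun z : α × α => f z.1 * a z.1 z.2 * g z.2) (μ.prod μ) := by
  obtain ⟨C, hC⟩ := hgb
  have h1 : Integrable (fun z : α × α => f z.1 * a z.1 z.2) (μ.prod μ) := by
    have hm : AEStronglyMeasurable (fun z : α × α => f z.1 * a z.1 z.2) (μ.prod μ) :=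
      hf.aestronglyMeasurable.comp_fst.mul ha_meas.aestronglyMeasurable
    rw [integrable_prod_iff hm]
    refine ⟨Filter.Eventually.of_forall fun x => ?_, ?_⟩
    · refine Integrable.const_mul (f := a x) ?_ (f x)
      by_contra h
      have := integral_undef h
      rw [ha_kernel] at this
      exact one_ne_zero this
    · have : (fun x => ∫ y, ‖f x * a x y‖ ∂μ) = fun x => ‖f x‖ := by
        funext x
        simp_rw [norm_mul, Real.norm_of_nonneg (ha_nonneg _ _)]
        rw [integral_const_mul, ha_kernel, mul_one]
      simpa only [this] using hf.norm
  exact h1.mul_bdd (c := C) (hg.comp measurable_snd).aestronglyMeasurable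
    (Filter.Eventually.of_forall fun z => hC z.2)

theorem duality {α : Type*} [MeasurableSpace α] (μ : Measure α) [SigmaFinite μ]
    (a : α → α → ℝ) (f g : α → ℝ)
    (ha_meas : Measurable (Function.uncurry a))
    (ha_nonneg : ∀ x' x, 0 ≤ a x' x)
    (ha_kernel : ∀ x', ∫ x, a x' x ∂μ = 1)
    (hf : Integrable f μ) (hg : Measurable g) (hgb : ∃ C, ∀ x, |g x| ≤ C) :
    ∫ x, (∫ x', a x x' * g x' ∂μ) * f x ∂μ = ∫ x, markovOp μ a f x * g x ∂μ := by
  have h := joint_integrable μ a f g ha_meas ha_nonneg ha_kernel hf hg hgb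
  have h2 := integral_integral_swap (f := fun x x' => f x * a x x' * g x') h
  simp only [markovOp]
  simp_rw [← integral_mul_const]
  rw [← h2]
  congr 1; funext x; congr 1; funext y; ring

theorem trueFilter_integrable {α : Type*} [MeasurableSpace α] (μ : Measure α) [SigmaFinite μ]
    (a0 : α → ℝ) (a : ℕ → α → α → ℝ) (b : ℕ → α → ℝ)
    (ha0_int : Integrable a0 μ)
    (ha_meas : ∀ t, Measurable (Function.uncurry (a t)))
    (ha_nonneg : ∀ t x' x, 0 ≤ a t x' x)
    (ha_kernel : ∀ t x', ∫ x, a t x' x ∂μ = 1)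
    (hb_meas : ∀ t, Measurable (b t))
    (hb_bdd : ∀ t, ∃ C, ∀ x, |b t x| ≤ C) (t : ℕ) :
    Integrable (trueFilter μ a0 a b t) μ := by
  induction t with
  | zero => exact ha0_int
  | succ t ih =>
    have h := joint_integrable μ (a (t + 1)) _ _ (ha_meas _) (ha_nonneg _) (ha_kernel _) ih
      (hb_meas (t + 1)) (hb_bdd (t + 1))
    have h2 := h.integral_prod_right
    simp only [integral_mul_const] at h2
    exact h2.div_const _

theorem obsOp_bdd {α : Type*} [MeasurableSpace α] (μ : Measure α) [SigmaFinite μ]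
    (a : ℕ → α → α → ℝ) (b : ℕ → α → ℝ)
    (ha_meas : ∀ t, Measurable (Function.uncurry (a t)))
    (ha_nonneg : ∀ t x' x, 0 ≤ a t x' x)
    (ha_kernel : ∀ t x', ∫ x, a t x' x ∂μ = 1)
    (hb_meas : ∀ t, Measurable (b t))
    (hb_bdd : ∀ t, ∃ C, ∀ x, |b t x| ≤ C) (t : ℕ) (g : α → ℝ)
    (hg : Measurable g) (hgb : ∃ C, ∀ x, |g x| ≤ C) :
    Measurable (obsOp μ a b t g) ∧ ∃ C, ∀ x, |obsOp μ a b t g x| ≤ C := by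
  constructor
  · have : Measurable (Function.uncurry fun x x' => a t x x' * (b t x' * g x')) :=
      (ha_meas t).mul (((hb_meas t).mul hg).comp measurable_snd)
    exact (this.stronglyMeasurable.integral_prod_right (ν := μ)).measurable
  · obtain ⟨C, hC⟩ := hgb
    obtain ⟨D, hD⟩ := hb_bdd t
    refine ⟨D * C, fun x => ?_⟩
    have hint : Integrable (a t x) μ := by
      by_contra h
      have := integral_undef h
      rw [ha_kernel] at this
      exact one_ne_zero this
    have h := norm_integral_le_of_norm_le (f := fun x' => a t x x' * (b t x' * g x'))
      (hint.mul_const (D * C)) (Filter.Eventually.of_forall fun y => by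
        rw [norm_mul, norm_mul, Real.norm_of_nonneg (ha_nonneg _ _ _)]
        exact mul_le_mul_of_nonneg_left
          (mul_le_mul (hD y) (hC y) (norm_nonneg _) ((abs_nonneg _).trans (hD y)))
          (ha_nonneg _ _ _))
    rw [integral_mul_const, ha_kernel, one_mul] at h
    exact h

theorem obsOpComp_succ' {α : Type*} [MeasurableSpace α] (μ : Measure α)
    (a : ℕ → α → α → ℝ) (b : ℕ → α → ℝ) (n s : ℕ) (ψ : α → ℝ) :
    obsOpComp μ a b (n + 1) s ψ = obsOpComp μ a b n s (obsOp μ a b (s + n) ψ) := by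
  induction n generalizing s with
  | zero => rfl
  | succ n ih =>
    rw [obsOpComp, ih, obsOpComp, show s + 1 + n = s + (n + 1) by omega]

/-- Representation (29) of the asymptotic variance of the particle filter with
i.i.d. resampling: with `V_0(ψ) = σ_0²(ψ)` and
`V_t(ψ) = σ_t²(ψ) + p(y_t|y_{1:t-1})⁻² V_{t-1}(L_t(ψ − m_t(ψ)))`, one has
`V_t(ψ) = σ_t²(ψ) + Σ_{s=1}^t σ_{s-1}²(L_{s:t}(ψ − m_t(ψ))) / p(y_{s:t}|y_{1:s-1})²`
where `p(y_{s:t}|y_{1:s-1}) = m_{s-1}(L_{s:t} 1)`; this representation rests on the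
identity `m_{t-1}(L_t(ψ − m_t(ψ))) = 0`. -/
theorem asymptotic_variance_representation
    {α : Type*} [MeasurableSpace α] (μ : Measure α) [SigmaFinite μ]
    (a0 : α → ℝ) (a : ℕ → α → α → ℝ) (b : ℕ → α → ℝ)
    (ha0_meas : Measurable a0) (ha0_nonneg : ∀ x, 0 ≤ a0 x)
    (ha0_int : Integrable a0 μ) (ha0_one : (∫ x, a0 x ∂μ) = 1)
    (ha_meas : ∀ t, Measurable (Function.uncurry (a t)))
    (ha_nonneg : ∀ t x' x, 0 ≤ a t x' x)
    (ha_kernel : ∀ t x', ∫ x, a t x' x ∂μ = 1)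
    (hb_meas : ∀ t, Measurable (b t))
    (hb_nonneg : ∀ t x, 0 ≤ b t x)
    (hb_bdd : ∀ t, ∃ C, ∀ x, b t x ≤ C)
    -- the filter moments m_t, σ_t² and the prediction densities p(y_t | y_{1:t-1})
    (m : ℕ → (α → ℝ) → ℝ)
    (hm : ∀ t ψ, m t ψ = ∫ x, ψ x * trueFilter μ a0 a b t x ∂μ)
    (σ2 : ℕ → (α → ℝ) → ℝ)
    (hσ2 : ∀ t ψ, σ2 t ψ = ∫ x, (ψ x - m t ψ) ^ 2 * trueFilter μ a0 a b t x ∂μ)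
    (p : ℕ → ℝ)
    (hp : ∀ t, p (t + 1) = m t (obsOp μ a b (t + 1) fun _ => 1))
    (hp_pos : ∀ t, 0 < p (t + 1))
    -- the asymptotic variance, defined recursively
    (V : ℕ → (α → ℝ) → ℝ)
    (hV0 : ∀ ψ, V 0 ψ = σ2 0 ψ)
    (hVsucc : ∀ t ψ, V (t + 1) ψ = σ2 (t + 1) ψ
      + V t (obsOp μ a b (t + 1) fun x => ψ x - m (t + 1) ψ) / p (t + 1) ^ 2) :
    ∀ (ψ : α → ℝ), Measurable ψ → (∃ C, ∀ x, |ψ x| ≤ C) →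
      (∀ t : ℕ,
        V t ψ = σ2 t ψ + ∑ s ∈ Finset.Icc 1 t,
          σ2 (s - 1) (obsOpComp μ a b (t + 1 - s) s fun x => ψ x - m t ψ)
            / (m (s - 1) (obsOpComp μ a b (t + 1 - s) s fun _ => 1)) ^ 2)
      ∧ (∀ t : ℕ, m t (obsOp μ a b (t + 1) fun x => ψ x - m (t + 1) ψ) = 0) := by
  have hb_bdd' : ∀ t, ∃ C, ∀ x, |b t x| ≤ C := fun t => by
    obtain ⟨C, hC⟩ := hb_bdd t
    exact ⟨C, fun x => by rw [abs_of_nonneg (hb_nonneg t x)]; exact hC x⟩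
  have hF := trueFilter_integrable μ a0 a b ha0_int ha_meas ha_nonneg ha_kernel hb_meas hb_bdd'
  have hO := obsOp_bdd μ a b ha_meas ha_nonneg ha_kernel hb_meas hb_bdd'
  have hbg : ∀ t (g : α → ℝ), (∃ C, ∀ x, |g x| ≤ C) → ∃ C, ∀ x, |b t x * g x| ≤ C := by
    rintro t g ⟨C, hC⟩
    obtain ⟨D, hD⟩ := hb_bdd' t
    refine ⟨D * C, fun x => ?_⟩
    rw [abs_mul]
    exact mul_le_mul (hD x) (hC x) (abs_nonneg _) ((abs_nonneg _).trans (hD x))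
  have hdual : ∀ t (g : α → ℝ), Measurable g → (∃ C, ∀ x, |g x| ≤ C) →
      m t (obsOp μ a b (t + 1) g) =
        ∫ x, markovOp μ (a (t + 1)) (trueFilter μ a0 a b t) x * (b (t + 1) x * g x) ∂μ := by
    intro t g hg hgb
    rw [hm]
    exact duality μ (a (t + 1)) (trueFilter μ a0 a b t) (fun x => b (t + 1) x * g x)
      (ha_meas _) (ha_nonneg _) (ha_kernel _) (hF t) ((hb_meas _).mul hg) (hbg _ g hgb)
  have hpe : ∀ t, p (t + 1) =
      ∫ x, markovOp μ (a (t + 1)) (trueFilter μ a0 a b t) x * b (t + 1) x ∂μ := by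
    intro t
    rw [hp, hdual t _ measurable_const ⟨1, fun x => by simp⟩]
    simp only [mul_one]
  have hkey : ∀ t (g : α → ℝ), Measurable g → (∃ C, ∀ x, |g x| ≤ C) →
      m t (obsOp μ a b (t + 1) g) = p (t + 1) * m (t + 1) g := by
    intro t g hg hgb
    rw [hdual t g hg hgb, hm, ← integral_const_mul]
    congr 1; funext x
    rw [trueFilter, bayesOp, ← hpe]
    have := (hp_pos t).ne'
    field_simp
  have hone : ∀ t, m (t + 1) (fun _ => 1) = 1 := by
    intro t
    have h := hkey t (fun _ => 1) measurable_const ⟨1, fun x => by simp⟩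
    rw [← hp] at h
    exact (mul_left_cancel₀ (hp_pos t).ne' (by rw [mul_one]; exact h)).symm
  have hcent_bdd : ∀ (ψ : α → ℝ) (c : ℝ), (∃ C, ∀ x, |ψ x| ≤ C) →
      ∃ C, ∀ x, |ψ x - c| ≤ C := by
    rintro ψ c ⟨C, hC⟩
    exact ⟨C + |c|, fun x => (abs_sub _ _).trans (by gcongr; exact hC x)⟩
  have hzero : ∀ (ψ : α → ℝ), Measurable ψ → (∃ C, ∀ x, |ψ x| ≤ C) →
      ∀ t : ℕ, m t (obsOp μ a b (t + 1) fun x => ψ x - m (t + 1) ψ) = 0 := by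
    intro ψ hψ hψb t
    rw [hkey t _ (hψ.sub_const _) (hcent_bdd ψ _ hψb)]
    have : m (t + 1) (fun x => ψ x - m (t + 1) ψ) = 0 := by
      have h1 := hone t
      rw [hm] at h1
      simp only [one_mul] at h1
      rw [hm]
      simp only [sub_mul]
      obtain ⟨C, hC⟩ := hψb
      rw [integral_sub ((hF (t + 1)).bdd_mul (c := C) hψ.aestronglyMeasurable
        (Filter.Eventually.of_forall hC)) ((hF (t + 1)).const_mul _), integral_const_mul, h1,
        ← hm]
      ring
    rw [this, mul_zero]
  have hcomp_bdd : ∀ n s (g : α → ℝ), Measurable g → (∃ C, ∀ x, |g x| ≤ C) →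
      Measurable (obsOpComp μ a b n s g) ∧ ∃ C, ∀ x, |obsOpComp μ a b n s g x| ≤ C := by
    intro n
    induction n with
    | zero => intro s g hg hgb; exact ⟨hg, hgb⟩
    | succ n ih =>
      intro s g hg hgb
      exact hO s _ (ih (s + 1) g hg hgb).1 (ih (s + 1) g hg hgb).2
  have hcomp : ∀ n s (g : α → ℝ), Measurable g → (∃ C, ∀ x, |g x| ≤ C) →
      m s (obsOpComp μ a b n (s + 1) g) =
        (∏ i ∈ Finset.range n, p (s + 1 + i)) * m (s + n) g := by
    intro n
    induction n with
    | zero => intro s g hg hgb; simp [obsOpComp]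
    | succ n ih =>
      intro s g hg hgb
      rw [obsOpComp_succ', ih s _ (hO _ g hg hgb).1 (hO _ g hg hgb).2, Finset.prod_range_succ,
        show s + 1 + n = s + n + 1 by omega, hkey _ g hg hgb, mul_assoc, ← add_assoc s n 1]
  have hcomp1 : ∀ n s, m s (obsOpComp μ a b (n + 1) (s + 1) fun _ => 1) =
      ∏ i ∈ Finset.range (n + 1), p (s + 1 + i) := by
    intro n s
    rw [hcomp (n + 1) s (fun _ => 1) measurable_const ⟨1, fun x => by simp⟩, ← add_assoc, hone, mul_one]
  intro ψ hψ hψb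
  refine ⟨fun t => ?_, hzero ψ hψ hψb⟩
  induction t generalizing ψ with
  | zero => simp [hV0]
  | succ t ih =>
    have hχ := hO (t + 1) _ (hψ.sub_const (m (t + 1) ψ)) (hcent_bdd ψ (m (t + 1) ψ) hψb)
    rw [hVsucc, ih _ hχ.1 hχ.2, hzero ψ hψ hψb t, Finset.sum_Icc_succ_top (by omega), add_div,
      add_comm (σ2 t _ / _), Finset.sum_div]
    congr 2
    · refine Finset.sum_congr rfl fun s hs => ?_
      rw [Finset.mem_Icc] at hs
      obtain ⟨k, rfl⟩ : ∃ k, s = k + 1 := ⟨s - 1, by omega⟩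
      obtain ⟨n, rfl⟩ : ∃ n, t = k + 1 + n := ⟨t - (k + 1), by omega⟩
      rw [show k + 1 + n + 1 - (k + 1) = n + 1 by omega,
        show k + 1 + n + 1 + 1 - (k + 1) = n + 1 + 1 by omega, Nat.add_sub_cancel,
        hcomp1, hcomp1, Finset.prod_range_succ _ (n + 1), div_div, ← mul_pow,
        obsOpComp_succ' μ a b (n + 1) (k + 1)]
      simp only [sub_zero, ← add_assoc]
    · rw [show t + 1 + 1 - (t + 1) = 0 + 1 by omega, Nat.add_sub_cancel, hp]
      rfl
end

section
/- Under condition (19) (with the same density h_t in both bounds and γ_a = c_a/C_a) and condition (20), the asymptotic variance of the particle filter with i.i.d. resampling satisfies, for every bounded measurable ψ and every t, V_t(ψ) ≤ γ_a^{-3} ( sup_x ψ(x) − inf_x ψ(x) )², i.e. the asymptotic variances stay bounded uniformly in t. -/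
open MeasureTheory

lemma avub_int {α : Type*} [MeasurableSpace α] {μ : Measure α} {k φ : α → ℝ} {M : ℝ}
    (hk : Integrable k μ) (hφ : Measurable φ) (hM : ∀ x, |φ x| ≤ M) :
    Integrable (fun x => φ x * k x) μ := by
  refine Integrable.mono' (hk.norm.const_mul M) (hφ.aestronglyMeasurable.mul hk.1) ?_
  refine Filter.Eventually.of_forall fun x => ?_
  simp only [norm_mul, Real.norm_eq_abs]
  exact mul_le_mul_of_nonneg_right (hM x) (abs_nonneg _)

/-- Being a probability density. -/
structure AvubDens {α : Type*} [MeasurableSpace α] (μ : Measure α) (f : α → ℝ) : Prop where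
  meas : Measurable f
  nonneg : ∀ x, 0 ≤ f x
  int : Integrable f μ
  one : ∫ x, f x ∂μ = 1

/-- One step assumptions. -/
structure AvubStep {α : Type*} [MeasurableSpace α] (μ : Measure α) (a : α → α → ℝ)
    (b h : α → ℝ) (ca Ca : ℝ) : Prop where
  ca_pos : 0 < ca
  lt : ca < Ca
  a_meas : Measurable (Function.uncurry a)
  a_nonneg : ∀ x' x, 0 ≤ a x' x
  h_meas : Measurable h
  h_nonneg : ∀ x, 0 ≤ h x
  lo : ∀ x' x, ca * h x ≤ a x' x
  hi : ∀ x' x, a x' x ≤ Ca * h x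
  b_meas : Measurable b
  b_nonneg : ∀ x, 0 ≤ b x
  pos : 0 < ∫ x, b x * h x ∂μ
  int : Integrable (fun x => b x * h x) μ

section
variable {α : Type*} [MeasurableSpace α] {μ : Measure α} {a : α → α → ℝ}
    {b h f : α → ℝ} {ca Ca : ℝ}

lemma AvubStep.ab_int (S : AvubStep μ a b h ca Ca) (x' : α) :
    Integrable (fun x => a x' x * b x) μ := by
  have hm : Measurable (fun x => a x' x) := S.a_meas.comp measurable_prodMk_left
  refine Integrable.mono' (S.int.const_mul Ca) (hm.mul S.b_meas).aestronglyMeasurable ?_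
  refine Filter.Eventually.of_forall fun x => ?_
  rw [Real.norm_of_nonneg (mul_nonneg (S.a_nonneg _ _) (S.b_nonneg _))]
  nlinarith [mul_le_mul_of_nonneg_right (S.hi x' x) (S.b_nonneg x)]

lemma AvubStep.F_int [SigmaFinite μ] (S : AvubStep μ a b h ca Ca) (hf : AvubDens μ f) {φ : α → ℝ} {M : ℝ}
    (hφ : Measurable φ) (hM : ∀ x, |φ x| ≤ M) :
    Integrable (Function.uncurry fun x' x => (a x' x * (b x * φ x)) * f x') (μ.prod μ) := by
  have h1 := (hf.int.mul_prod S.int).const_mul (Ca * M)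
  refine Integrable.mono' h1 ?_ ?_
  · have := S.a_meas
    have := S.b_meas
    have := hf.meas
    refine Measurable.aestronglyMeasurable ?_
    refine (S.a_meas.mul ((S.b_meas.comp measurable_snd).mul (hφ.comp measurable_snd))).mul
      (hf.meas.comp measurable_fst)
  · refine Filter.Eventually.of_forall fun z => ?_
    obtain ⟨x', x⟩ := z
    simp only [Function.uncurry, norm_mul, Real.norm_eq_abs, abs_of_nonneg (S.a_nonneg _ _),
      abs_of_nonneg (S.b_nonneg _), abs_of_nonneg (hf.nonneg _)]
    have hM0 : 0 ≤ M := (abs_nonneg _).trans (hM x)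
    have e : Ca * M * (f x' * (b x * h x)) = ((Ca * h x) * (b x * M)) * f x' := by ring
    rw [e]
    have := S.hi x' x
    have := hM x
    have := S.a_nonneg x' x
    have := S.b_nonneg x
    have := hf.nonneg x'
    have : 0 ≤ Ca * h x := (S.a_nonneg x' x).trans (S.hi x' x)
    gcongr

lemma AvubStep.P_meas [SigmaFinite μ] (S : AvubStep μ a b h ca Ca) (hf : AvubDens μ f) :
    Measurable (markovOp μ a f) := by
  have : StronglyMeasurable (Function.uncurry fun x x' => f x' * a x' x) := by
    refine Measurable.stronglyMeasurable ?_
    exact (hf.meas.comp measurable_snd).mul (S.a_meas.comp measurable_swap)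
  exact this.integral_prod_right.measurable

lemma AvubStep.L_meas [SigmaFinite μ] (S : AvubStep μ a b h ca Ca) {φ : α → ℝ}
    (hφ : Measurable φ) :
    Measurable (fun x => ∫ x', a x x' * (b x' * φ x') ∂μ) := by
  have : StronglyMeasurable (Function.uncurry fun x x' => a x x' * (b x' * φ x')) := by
    refine Measurable.stronglyMeasurable ?_
    exact S.a_meas.mul ((S.b_meas.comp measurable_snd).mul (hφ.comp measurable_snd))
  exact this.integral_prod_right.measurable

lemma AvubStep.fa_int (S : AvubStep μ a b h ca Ca) (hf : AvubDens μ f) (x : α) :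
    Integrable (fun x' => f x' * a x' x) μ := by
  have hm : Measurable (fun x' => a x' x) := S.a_meas.comp measurable_prodMk_right
  have := avub_int (M := Ca * h x) hf.int hm
    (fun x' => by rw [abs_of_nonneg (S.a_nonneg _ _)]; exact S.hi _ _)
  simpa only [mul_comm] using this

lemma AvubStep.P_lo (S : AvubStep μ a b h ca Ca) (hf : AvubDens μ f) (x : α) :
    ca * h x ≤ markovOp μ a f x := by
  have : ∫ x', f x' * (ca * h x) ∂μ ≤ ∫ x', f x' * a x' x ∂μ :=
    integral_mono (hf.int.mul_const _) (S.fa_int hf x)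
      (fun x' => mul_le_mul_of_nonneg_left (S.lo _ _) (hf.nonneg _))
  rw [integral_mul_const, hf.one, one_mul] at this
  exact this

lemma AvubStep.P_hi (S : AvubStep μ a b h ca Ca) (hf : AvubDens μ f) (x : α) :
    markovOp μ a f x ≤ Ca * h x := by
  have : ∫ x', f x' * a x' x ∂μ ≤ ∫ x', f x' * (Ca * h x) ∂μ :=
    integral_mono (S.fa_int hf x) (hf.int.mul_const _)
      (fun x' => mul_le_mul_of_nonneg_left (S.hi _ _) (hf.nonneg _))
  rw [integral_mul_const, hf.one, one_mul] at this
  exact this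

lemma AvubStep.P_nonneg (S : AvubStep μ a b h ca Ca) (hf : AvubDens μ f) (x : α) :
    0 ≤ markovOp μ a f x :=
  (mul_nonneg S.ca_pos.le (S.h_nonneg x)).trans (S.P_lo hf x)

lemma AvubStep.Pb_int [SigmaFinite μ] (S : AvubStep μ a b h ca Ca) (hf : AvubDens μ f) :
    Integrable (fun x => markovOp μ a f x * b x) μ := by
  refine Integrable.mono' (S.int.const_mul Ca)
    ((S.P_meas hf).mul S.b_meas).aestronglyMeasurable ?_
  refine Filter.Eventually.of_forall fun x => ?_
  rw [Real.norm_of_nonneg (mul_nonneg (S.P_nonneg hf _) (S.b_nonneg _))]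
  nlinarith [mul_le_mul_of_nonneg_right (S.P_hi hf x) (S.b_nonneg x)]

lemma AvubStep.Z_pos [SigmaFinite μ] (S : AvubStep μ a b h ca Ca) (hf : AvubDens μ f) :
    0 < ∫ x, markovOp μ a f x * b x ∂μ := by
  refine lt_of_lt_of_le (mul_pos S.ca_pos S.pos) ?_
  rw [← integral_const_mul]
  refine integral_mono (S.int.const_mul _) (S.Pb_int hf) fun x => ?_
  have := mul_le_mul_of_nonneg_right (S.P_lo hf x) (S.b_nonneg x)
  simp only
  linarith

lemma AvubStep.dens [SigmaFinite μ] (S : AvubStep μ a b h ca Ca) (hf : AvubDens μ f) :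
    AvubDens μ (bayesOp μ (markovOp μ a f) b) where
  meas := ((S.P_meas hf).mul S.b_meas).div_const _
  nonneg x := div_nonneg (mul_nonneg (S.P_nonneg hf x) (S.b_nonneg x)) (S.Z_pos hf).le
  int := (S.Pb_int hf).div_const _
  one := by
    unfold bayesOp
    rw [integral_div, div_self (S.Z_pos hf).ne']

/-- Duality. -/
lemma AvubStep.dual [SigmaFinite μ] (S : AvubStep μ a b h ca Ca) (hf : AvubDens μ f)
    {φ : α → ℝ} {M : ℝ} (hφ : Measurable φ) (hM : ∀ x, |φ x| ≤ M) :
    ∫ x', (∫ x, a x' x * (b x * φ x) ∂μ) * f x' ∂μ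
      = (∫ x, markovOp μ a f x * b x ∂μ) *
        ∫ x, φ x * bayesOp μ (markovOp μ a f) b x ∂μ := by
  have h1 := integral_integral_swap (S.F_int hf hφ hM)
  simp only [integral_mul_const] at h1
  rw [h1, ← integral_const_mul]
  congr 1
  ext x
  have h2 : ∫ x', a x' x * (b x * φ x) * f x' ∂μ = (b x * φ x) * markovOp μ a f x := by
    unfold markovOp
    rw [← integral_const_mul]
    congr 1
    ext x'
    ring
  rw [h2]
  unfold bayesOp
  have := (S.Z_pos hf).ne'
  field_simp

/-- The contraction step. -/
lemma AvubStep.contract [SigmaFinite μ] (S : AvubStep μ a b h ca Ca) (hf : AvubDens μ f)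
    {g u : α → ℝ} {G A D : ℝ} (hg : Measurable g) (hu : Measurable u)
    (hg0 : ∀ x, 0 ≤ g x) (hgG : ∀ x, g x ≤ G) (huA : ∀ x, A ≤ u x) (huD : ∀ x, u x ≤ A + D)
    (hpos : 0 < ∫ x, g x * bayesOp μ (markovOp μ a f) b x ∂μ) :
    ∃ (g' u' : α → ℝ) (A' : ℝ), Measurable g' ∧ Measurable u' ∧
      (∀ x, g' x = ∫ x', a x x' * (b x' * g x') ∂μ) ∧
      (∀ x, g' x * u' x = ∫ x', a x x' * (b x' * (g x' * u x')) ∂μ) ∧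
      (∀ x, 0 ≤ g' x) ∧
      (∀ x, g' x ≤ (ca / Ca)⁻¹ * ∫ x, g' x * f x ∂μ) ∧
      (∀ x, A' ≤ u' x) ∧ (∀ x, u' x ≤ A' + (1 - ca / Ca) * D) := by
  have hca := S.ca_pos
  have hCa : 0 < Ca := hca.trans S.lt
  have hγ : 0 < ca / Ca := div_pos hca hCa
  have hgabs : ∀ x, |g x| ≤ G := fun x => by rw [abs_of_nonneg (hg0 x)]; exact hgG x
  have huabs : ∀ x, |u x| ≤ |A| + |A + D| := fun x => by
    rw [abs_le]
    constructor
    · linarith [huA x, neg_abs_le A, abs_nonneg (A + D)]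
    · linarith [huD x, le_abs_self (A + D), abs_nonneg A]
  set k : α → ℝ := fun x => g x * (b x * h x) with hk
  have hk0 : ∀ x, 0 ≤ k x := fun x =>
    mul_nonneg (hg0 x) (mul_nonneg (S.b_nonneg x) (S.h_nonneg x))
  have hki : Integrable k μ := avub_int S.int hg hgabs
  have hki' : Integrable (fun x => u x * k x) μ := avub_int hki hu huabs
  have hki2 : ∀ x, Integrable (fun x' => a x x' * (b x' * g x')) μ := fun x => by
    have := avub_int (S.ab_int x) hg hgabs
    refine this.congr (Filter.Eventually.of_forall fun y => ?_)
    simp only; ring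
  have hki3 : ∀ x, Integrable (fun x' => a x x' * (b x' * (g x' * u x'))) μ := fun x => by
    have := avub_int (hki2 x) hu huabs
    refine this.congr (Filter.Eventually.of_forall fun y => ?_)
    simp only; ring
  set I := ∫ x, k x ∂μ with hI
  set J := ∫ x, u x * k x ∂μ with hJ
  have hIpos : 0 < I := by
    by_contra hn
    have hI0 : I = 0 := le_antisymm (not_lt.mp hn) (integral_nonneg hk0)
    have hle : ∫ x, g x * bayesOp μ (markovOp μ a f) b x ∂μ
        ≤ ∫ x, (Ca / ∫ x, markovOp μ a f x * b x ∂μ) * k x ∂μ := by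
      refine integral_mono (avub_int (S.dens hf).int hg hgabs) (hki.const_mul _) fun x => ?_
      simp only [bayesOp, hk]
      rw [div_mul_eq_mul_div, mul_div_assoc']
      refine div_le_div_of_nonneg_right ?_ (S.Z_pos hf).le
      have := mul_le_mul_of_nonneg_left (S.P_hi hf x) (mul_nonneg (hg0 x) (S.b_nonneg x))
      linarith
    rw [integral_const_mul, ← hI, hI0, mul_zero] at hle
    linarith
  have hglo : ∀ x, ca * I ≤ ∫ x', a x x' * (b x' * g x') ∂μ := fun x => by
    rw [hI, ← integral_const_mul]
    refine integral_mono (hki.const_mul _) (hki2 x) fun y => ?_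
    have := mul_le_mul_of_nonneg_right (S.lo x y) (mul_nonneg (S.b_nonneg y) (hg0 y))
    simp only [hk]; linarith
  have hghi : ∀ x, ∫ x', a x x' * (b x' * g x') ∂μ ≤ Ca * I := fun x => by
    rw [hI, ← integral_const_mul]
    refine integral_mono (hki2 x) (hki.const_mul _) fun y => ?_
    have := mul_le_mul_of_nonneg_right (S.hi x y) (mul_nonneg (S.b_nonneg y) (hg0 y))
    simp only [hk]; linarith
  have hgpos : ∀ x, 0 < ∫ x', a x x' * (b x' * g x') ∂μ := fun x =>
    (mul_pos hca hIpos).trans_le (hglo x)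
  have hJlo : A * I ≤ J := by
    rw [hI, ← integral_const_mul]
    exact integral_mono (hki.const_mul _) hki' fun y =>
      mul_le_mul_of_nonneg_right (huA y) (hk0 y)
  have hJhi : J ≤ (A + D) * I := by
    rw [hI, ← integral_const_mul]
    exact integral_mono hki' (hki.const_mul _) fun y =>
      mul_le_mul_of_nonneg_right (huD y) (hk0 y)
  have hLm := S.L_meas hg
  have hLum := S.L_meas (hg.mul hu)
  have key1 : ∀ x, ca * (J - A * I) ≤ (∫ x', a x x' * (b x' * (g x' * u x')) ∂μ)
      - A * ∫ x', a x x' * (b x' * g x') ∂μ := fun x => by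
    rw [hI, hJ, ← integral_const_mul, ← integral_const_mul, ← integral_sub hki' (hki.const_mul _),
      ← integral_const_mul, ← integral_sub (hki3 x) ((hki2 x).const_mul _)]
    refine integral_mono ((hki'.sub (hki.const_mul _)).const_mul _)
      ((hki3 x).sub ((hki2 x).const_mul _)) fun y => ?_
    have := mul_le_mul_of_nonneg_right (S.lo x y) (mul_nonneg (mul_nonneg (S.b_nonneg y) (hg0 y))
      (sub_nonneg.mpr (huA y)))
    simp only [hk]; linarith
  have key2 : ∀ x, ca * ((A + D) * I - J) ≤ (A + D) * (∫ x', a x x' * (b x' * g x') ∂μ)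
      - ∫ x', a x x' * (b x' * (g x' * u x')) ∂μ := fun x => by
    rw [hI, hJ, ← integral_const_mul, ← integral_const_mul, ← integral_sub (hki.const_mul _) hki',
      ← integral_const_mul, ← integral_sub ((hki2 x).const_mul _) (hki3 x)]
    refine integral_mono (((hki.const_mul _).sub hki').const_mul _)
      (((hki2 x).const_mul _).sub (hki3 x)) fun y => ?_
    have := mul_le_mul_of_nonneg_right (S.lo x y) (mul_nonneg (mul_nonneg (S.b_nonneg y) (hg0 y))
      (sub_nonneg.mpr (huD y)))
    simp only [hk]; linarith
  refine ⟨fun x => ∫ x', a x x' * (b x' * g x') ∂μ,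
    fun x => (∫ x', a x x' * (b x' * (g x' * u x')) ∂μ) / ∫ x', a x x' * (b x' * g x') ∂μ,
    A + ca / Ca * (J / I - A), hLm, hLum.div hLm, fun x => rfl,
    fun x => mul_div_cancel₀ _ (hgpos x).ne', fun x => (hgpos x).le, fun x => ?_, fun x => ?_,
    fun x => ?_⟩
  · have h1 : ca * I ≤ ∫ x, (∫ x', a x x' * (b x' * g x') ∂μ) * f x ∂μ := by
      have h2 : ∫ x, ca * I * f x ∂μ = ca * I := by rw [integral_const_mul, hf.one, mul_one]
      rw [← h2]
      refine integral_mono (hf.int.const_mul _) (avub_int (M := Ca * I) hf.int hLm fun x => ?_)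
        fun x => mul_le_mul_of_nonneg_right (hglo x) (hf.nonneg x)
      rw [abs_of_nonneg (hgpos x).le]
      exact hghi x
    refine (hghi x).trans ?_
    have h3 : Ca * I = (ca / Ca)⁻¹ * (ca * I) := by field_simp
    rw [h3]
    exact mul_le_mul_of_nonneg_left h1 (inv_pos.mpr hγ).le
  · rw [le_div_iff₀ (hgpos x)]
    have hk1 := key1 x
    have e : ca * (J - A * I) = ca / Ca * (J / I - A) * (Ca * I) := by field_simp
    have hq : 0 ≤ ca / Ca * (J / I - A) :=
      mul_nonneg hγ.le (sub_nonneg.mpr ((le_div_iff₀ hIpos).mpr hJlo))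
    have := mul_le_mul_of_nonneg_left (hghi x) hq
    linarith
  · rw [div_le_iff₀ (hgpos x)]
    have hk1 := key2 x
    have e : ca * ((A + D) * I - J) = ca / Ca * (A + D - J / I) * (Ca * I) := by field_simp
    have hq : 0 ≤ ca / Ca * (A + D - J / I) :=
      mul_nonneg hγ.le (sub_nonneg.mpr ((div_le_iff₀ hIpos).mpr hJhi))
    have := mul_le_mul_of_nonneg_left (hghi x) hq
    linarith

/-- The variance bound for a single time. -/
lemma avub_sigma (hf : AvubDens μ f) {g u : α → ℝ} {A D G : ℝ}
    (hg : Measurable g) (hu : Measurable u)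
    (hg0 : ∀ x, 0 ≤ g x) (hgG : ∀ x, g x ≤ G) (huA : ∀ x, A ≤ u x) (huD : ∀ x, u x ≤ A + D)
    (hpos : 0 < ∫ x, g x * f x ∂μ) (hz : ∫ x, g x * u x * f x ∂μ = 0) :
    ∫ x, (g x * u x - 0) ^ 2 * f x ∂μ ≤ G ^ 2 * D ^ 2 := by
  have hgabs : ∀ x, |g x| ≤ G := fun x => by rw [abs_of_nonneg (hg0 x)]; exact hgG x
  have huabs : ∀ x, |u x| ≤ |A| + |A + D| := fun x => by
    rw [abs_le]
    constructor
    · linarith [huA x, neg_abs_le A, abs_nonneg (A + D)]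
    · linarith [huD x, le_abs_self (A + D), abs_nonneg A]
  have i1 : Integrable (fun x => g x * f x) μ := avub_int hf.int hg hgabs
  have i2 : Integrable (fun x => g x * u x * f x) μ :=
    (avub_int i1 hu huabs).congr (Filter.Eventually.of_forall fun y => by simp only; ring)
  have hA : A ≤ 0 := by
    have : ∫ x, A * (g x * f x) ∂μ ≤ ∫ x, g x * u x * f x ∂μ :=
      integral_mono (i1.const_mul _) i2 fun x => by
        have := mul_le_mul_of_nonneg_right (huA x) (mul_nonneg (hg0 x) (hf.nonneg x))
        simp only; linarith
    rw [hz, integral_const_mul] at this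
    by_contra hn
    exact absurd this (not_le.mpr (mul_pos (not_le.mp hn) hpos))
  have hAD : 0 ≤ A + D := by
    have : ∫ x, g x * u x * f x ∂μ ≤ ∫ x, (A + D) * (g x * f x) ∂μ :=
      integral_mono i2 (i1.const_mul _) fun x => by
        have := mul_le_mul_of_nonneg_right (huD x) (mul_nonneg (hg0 x) (hf.nonneg x))
        simp only; linarith
    rw [hz, integral_const_mul] at this
    by_contra hn
    exact absurd this (not_le.mpr (mul_neg_of_neg_of_pos (not_le.mp hn) hpos))
  have e : ∫ x, (G ^ 2 * D ^ 2) * f x ∂μ = G ^ 2 * D ^ 2 := by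
    rw [integral_const_mul, hf.one, mul_one]
  rw [← e]
  refine integral_mono_of_nonneg
    (Filter.Eventually.of_forall fun x => mul_nonneg (sq_nonneg _) (hf.nonneg x))
    (hf.int.const_mul _) (Filter.Eventually.of_forall fun x => ?_)
  refine mul_le_mul_of_nonneg_right ?_ (hf.nonneg x)
  rw [sub_zero, mul_pow]
  have h1 : g x ^ 2 ≤ G ^ 2 := pow_le_pow_left₀ (hg0 x) (hgG x) 2
  have h2 : u x ^ 2 ≤ D ^ 2 := by
    apply sq_le_sq'
    · linarith [huA x]
    · linarith [huD x]
  exact mul_le_mul h1 h2 (sq_nonneg _) (sq_nonneg _)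

end

/-- Bound (30): under conditions (19) (`c_a h_t ≤ a_t(x',·) ≤ C_a h_t`) and (20)
(`0 < ∫ b_t h_t dμ < ∞`), the asymptotic variance of the particle filter with
i.i.d. resampling satisfies, for every bounded measurable `ψ` and every `t`,
`V_t(ψ) ≤ γ_a⁻³ (sup ψ − inf ψ)²` with `γ_a = c_a/C_a`; in particular the asymptotic
variances stay bounded uniformly in `t`. -/
theorem asymptotic_variance_uniformly_bounded
    {α : Type*} [MeasurableSpace α] (μ : Measure α) [SigmaFinite μ]
    (a0 : α → ℝ) (a : ℕ → α → α → ℝ) (b : ℕ → α → ℝ) (h : ℕ → α → ℝ)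
    (ca Ca : ℝ) (hca : 0 < ca) (hcaCa : ca < Ca)
    (ha0_meas : Measurable a0) (ha0_nonneg : ∀ x, 0 ≤ a0 x)
    (ha0_int : Integrable a0 μ) (ha0_one : (∫ x, a0 x ∂μ) = 1)
    (ha_meas : ∀ t, Measurable (Function.uncurry (a t)))
    (ha_nonneg : ∀ t x' x, 0 ≤ a t x' x)
    (ha_kernel : ∀ t x', ∫ x, a t x' x ∂μ = 1)
    (hh_meas : ∀ t, Measurable (h t)) (hh_nonneg : ∀ t x, 0 ≤ h t x)
    (hh_int : ∀ t, Integrable (h t) μ) (hh_one : ∀ t, ∫ x, h t x ∂μ = 1)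
    -- condition (19)
    (h19 : ∀ t x' x, ca * h t x ≤ a t x' x ∧ a t x' x ≤ Ca * h t x)
    -- condition (20)
    (hb_meas : ∀ t, Measurable (b t))
    (hb_nonneg : ∀ t x, 0 ≤ b t x)
    (h20_pos : ∀ t, 0 < ∫ x, b t x * h t x ∂μ)
    (h20_int : ∀ t, Integrable (fun x => b t x * h t x) μ)
    -- the filter moments m_t, σ_t² and the prediction densities p(y_t | y_{1:t-1})
    (m : ℕ → (α → ℝ) → ℝ)
    (hm : ∀ t ψ, m t ψ = ∫ x, ψ x * trueFilter μ a0 a b t x ∂μ)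
    (σ2 : ℕ → (α → ℝ) → ℝ)
    (hσ2 : ∀ t ψ, σ2 t ψ = ∫ x, (ψ x - m t ψ) ^ 2 * trueFilter μ a0 a b t x ∂μ)
    (p : ℕ → ℝ)
    (hp : ∀ t, p (t + 1) = m t (obsOp μ a b (t + 1) fun _ => 1))
    -- the asymptotic variance, defined recursively
    (V : ℕ → (α → ℝ) → ℝ)
    (hV0 : ∀ ψ, V 0 ψ = σ2 0 ψ)
    (hVsucc : ∀ t ψ, V (t + 1) ψ = σ2 (t + 1) ψ
      + V t (obsOp μ a b (t + 1) fun x => ψ x - m (t + 1) ψ) / p (t + 1) ^ 2) :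
    ∀ (ψ : α → ℝ), Measurable ψ →
      BddAbove (Set.range ψ) → BddBelow (Set.range ψ) →
      ∀ t : ℕ, V t ψ ≤ ((ca / Ca)⁻¹) ^ 3 * ((⨆ x, ψ x) - ⨅ x, ψ x) ^ 2 := by
  have hCa : 0 < Ca := hca.trans hcaCa
  have hγ0 : 0 < ca / Ca := div_pos hca hCa
  have hγ1 : ca / Ca ≤ 1 := ((div_lt_one hCa).mpr hcaCa).le
  have hstep : ∀ t, AvubStep μ (a t) (b t) (h t) ca Ca := fun t =>
    ⟨hca, hcaCa, ha_meas t, ha_nonneg t, hh_meas t, hh_nonneg t, fun x' x => (h19 t x' x).1,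
      fun x' x => (h19 t x' x).2, hb_meas t, hb_nonneg t, h20_pos t, h20_int t⟩
  have hdens : ∀ t, AvubDens μ (trueFilter μ a0 a b t) := by
    intro t
    induction t with
    | zero => exact ⟨ha0_meas, ha0_nonneg, ha0_int, ha0_one⟩
    | succ t ih => exact (hstep (t + 1)).dens ih
  have hdual : ∀ t (φ : α → ℝ) (M : ℝ), Measurable φ → (∀ x, |φ x| ≤ M) →
      m t (obsOp μ a b (t + 1) φ)
        = (∫ x, markovOp μ (a (t + 1)) (trueFilter μ a0 a b t) x * b (t + 1) x ∂μ)
          * m (t + 1) φ := by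
    intro t φ M hφ hM
    rw [hm, hm]
    exact (hstep (t + 1)).dual (hdens t) hφ hM
  have hpZ : ∀ t, p (t + 1)
      = ∫ x, markovOp μ (a (t + 1)) (trueFilter μ a0 a b t) x * b (t + 1) x ∂μ := by
    intro t
    rw [hp, hdual t _ 1 measurable_const (fun x => by simp), hm]
    simp only [one_mul]
    rw [(hdens (t + 1)).one, mul_one]
  have hppos : ∀ t, 0 < p (t + 1) := fun t => by
    rw [hpZ]; exact (hstep (t + 1)).Z_pos (hdens t)
  have claim : ∀ t (g u : α → ℝ) (A D : ℝ), Measurable g → Measurable u →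
      (∀ x, 0 ≤ g x) → (∀ x, g x ≤ (ca / Ca)⁻¹ * m t g) → 0 < m t g →
      (∀ x, A ≤ u x) → (∀ x, u x ≤ A + D) → m t (fun x => g x * u x) = 0 →
      V t (fun x => g x * u x) ≤ ((ca / Ca)⁻¹) ^ 3 * (m t g ^ 2 * D ^ 2) := by
    intro t
    induction t with
    | zero =>
      intro g u A D hg hu hg0 hgG hpos huA huD hz
      rw [hV0, hσ2, hz]
      have hs := avub_sigma (hdens 0) hg hu hg0 hgG huA huD (by rw [← hm]; exact hpos)
        (by rw [hm] at hz; exact hz)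
      refine hs.trans ?_
      rw [mul_pow, mul_assoc]
      refine mul_le_mul_of_nonneg_right ?_ (by positivity)
      exact pow_le_pow_right₀ ((one_le_inv₀ hγ0).mpr hγ1) (by norm_num)
    | succ t ih =>
      intro g u A D hg hu hg0 hgG hpos huA huD hz
      have hs := avub_sigma (hdens (t + 1)) hg hu hg0 hgG huA huD (by rw [← hm]; exact hpos)
        (by rw [hm] at hz; exact hz)
      rw [hVsucc, hσ2, hz]
      obtain ⟨g', u', A', hg'm, hu'm, hg', hgu', hg'0, hg'G, hu'A, hu'D⟩ :=
        (hstep (t + 1)).contract (hdens t) hg hu hg0 hgG huA huD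
          (by have := hpos; rw [hm] at this; exact this)
      have hgabs : ∀ x, |g x| ≤ (ca / Ca)⁻¹ * m (t + 1) g :=
        fun x => by rw [abs_of_nonneg (hg0 x)]; exact hgG x
      have huabs : ∀ x, |u x| ≤ |A| + |A + D| := fun x => by
        rw [abs_le]
        constructor
        · linarith [huA x, neg_abs_le A, abs_nonneg (A + D)]
        · linarith [huD x, le_abs_self (A + D), abs_nonneg A]
      have eg : g' = obsOp μ a b (t + 1) g := funext hg'
      have egu : (fun x => g' x * u' x) = obsOp μ a b (t + 1) (fun x => g x * u x) := funext hgu'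
      have mg : m t g' = p (t + 1) * m (t + 1) g := by
        rw [eg, hpZ]; exact hdual t g _ hg hgabs
      have mgu : m t (fun x => g' x * u' x) = 0 := by
        rw [egu, hdual t (fun x => g x * u x) ((ca / Ca)⁻¹ * m (t + 1) g * (|A| + |A + D|)) (hg.mul hu), hz, mul_zero]
        intro x
        rw [abs_mul]
        exact mul_le_mul (hgabs x) (huabs x) (abs_nonneg _) ((abs_nonneg _).trans (hgabs x))
      have hih := ih g' u' A' ((1 - ca / Ca) * D) hg'm hu'm hg'0
        (by rw [hm]; exact hg'G) (by rw [mg]; exact mul_pos (hppos t) hpos) hu'A hu'D mgu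
      simp only [sub_zero] at hs ⊢
      rw [← egu]
      have h2 : V t (fun x => g' x * u' x) / p (t + 1) ^ 2
          ≤ ((ca / Ca)⁻¹) ^ 3 * (m (t + 1) g ^ 2 * ((1 - ca / Ca) * D) ^ 2) := by
        rw [div_le_iff₀ (pow_pos (hppos t) 2)]
        refine hih.trans (le_of_eq ?_)
        rw [mg]; ring
      refine (add_le_add hs h2).trans ?_
      generalize ca / Ca = γ at *
      have e1 : (γ⁻¹ * m (t + 1) g) ^ 2 * D ^ 2 = γ⁻¹ ^ 3 * (m (t + 1) g ^ 2 * D ^ 2) * γ := by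
        field_simp
      rw [e1]
      have hK : 0 ≤ γ⁻¹ ^ 3 * (m (t + 1) g ^ 2 * D ^ 2) := by positivity
      have : γ + (1 - γ) ^ 2 ≤ 1 := by nlinarith
      have := mul_le_mul_of_nonneg_left this hK
      linarith
  intro ψ hψ hA hB t
  have hlo : ∀ x, (⨅ x, ψ x) ≤ ψ x := fun x => ciInf_le hB x
  have hhi : ∀ x, ψ x ≤ ⨆ x, ψ x := fun x => le_ciSup hA x
  have hψabs : ∀ x, |ψ x| ≤ |⨅ x, ψ x| + |⨆ x, ψ x| := fun x => by
    rw [abs_le]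
    constructor
    · linarith [hlo x, neg_abs_le (⨅ x, ψ x), abs_nonneg (⨆ x, ψ x)]
    · linarith [hhi x, le_abs_self (⨆ x, ψ x), abs_nonneg (⨅ x, ψ x)]
  have m1 : ∀ t, m t (fun _ => 1) = 1 := fun t => by
    rw [hm]; simp only [one_mul]; exact (hdens t).one
  have mz : ∀ t, m t (fun x => ψ x - m t ψ) = 0 := fun t => by
    rw [hm t (fun x => ψ x - m t ψ)]
    simp only [sub_mul]
    rw [integral_sub (avub_int (hdens t).int hψ hψabs) ((hdens t).int.const_mul _),
      integral_const_mul, (hdens t).one, ← hm, mul_one, sub_self]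
  have hc := claim t (fun _ => 1) (fun x => ψ x - m t ψ) ((⨅ x, ψ x) - m t ψ)
    ((⨆ x, ψ x) - ⨅ x, ψ x) measurable_const (hψ.sub_const _) (fun _ => zero_le_one)
    (fun _ => by rw [m1, mul_one]; exact (one_le_inv₀ hγ0).mpr hγ1)
    (by rw [m1]; exact one_pos) (fun x => by linarith [hlo x]) (fun x => by linarith [hhi x])
    (by simp only [one_mul]; exact mz t)
  simp only [one_mul, m1, one_pow] at hc
  have hVeq : V t ψ = V t (fun x => ψ x - m t ψ) := by
    cases t with
    | zero => rw [hV0, hV0, hσ2, hσ2, mz]; simp only [sub_zero]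
    | succ t => rw [hVsucc, hVsucc, hσ2, hσ2, mz]; simp only [sub_zero]
  rw [hVeq]
  exact hc
end
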